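/- Let (a_n)_{n≥1} be a sequence of complex numbers with ∑_{n=1}^∞ |a_n| < ∞, and define f(x) = ∑_{n=1}^∞ a_n · (J_{in/2}(x)² + Y_{in/2}(x)²) for x > 0 (this series converges absolutely for each x > 0). Then for every n ≥ 1 the improper integral ∫₀^∞ Φ_n(x) f(x) dx converges and a_n = sinh(πn/2) · ∫₀^∞ Φ_n(x) f(x) dx, where Φ_n(x) = x · ∫₀^π J₀(2x·cosh u) · sinh(2u) · sin(nu) du. -/

import Mathlib

open MeasureTheory Filter Topology

/-- Bessel function of the first kind of complex order `ν` at real `x > 0`. -/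
noncomputable def besselJ (ν : ℂ) (x : ℝ) : ℂ :=
  ∑' k : ℕ, ((-1 : ℂ) ^ k * Complex.exp ((ν + 2 * k) * (Real.log (x / 2) : ℂ))) /
    ((Nat.factorial k : ℂ) * Complex.Gamma (ν + k + 1))

/-- Bessel function of the second kind of complex order `ν` at real `x > 0`. -/
noncomputable def besselY (ν : ℂ) (x : ℝ) : ℂ :=
  (besselJ ν x * Complex.cos (Real.pi * ν) - besselJ (-ν) x) / Complex.sin (Real.pi * ν)

/-- Bessel function of the first kind of order `0` (real-valued). -/
noncomputable def besselJ0 (x : ℝ) : ℝ :=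
  ∑' k : ℕ, (-1 : ℝ) ^ k * (x / 2) ^ (2 * k) / (Nat.factorial k : ℝ) ^ 2

/-- Lommel function `S_{-1,0}` for `x > 0`. -/
noncomputable def lommelS (x : ℝ) : ℝ :=
  ∫ t in Set.Ioi (0 : ℝ), t * Real.exp (-x * Real.sinh t)

/-- Struve function `K₀` for `x > 0`. -/
noncomputable def struveK0 (x : ℝ) : ℝ :=
  (2 / Real.pi) * ∫ t in Set.Ioi (0 : ℝ), Real.exp (-x * Real.sinh t)

/-- Bessel function of the second kind of order `0` (real-valued, for `x > 0`). -/
noncomputable def besselY0 (x : ℝ) : ℝ :=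
  (2 / Real.pi) * ((Real.log (x / 2) + Real.eulerMascheroniConstant) * besselJ0 x +
    ∑' k : ℕ, (-1 : ℝ) ^ k * ((harmonic (k + 1) : ℚ) : ℝ) * (x / 2) ^ (2 * (k + 1)) /
      (Nat.factorial (k + 1) : ℝ) ^ 2)

/-- Struve function `H₀`: `H₀ = K₀ˢ + Y₀`. -/
noncomputable def struveH0 (x : ℝ) : ℝ := struveK0 x + besselY0 x

/-!
Nicholson's formula `J_ν² + Y_ν² = (4 / π²) ∫ e^{2νt} K₀(2 x sinh |t|) dt`, over the real line,
comes from writing a product of two Macdonald functions as a convolution and letting their arguments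
tend to `i x` and `-i x`. At `ν = i m / 2` it exhibits `J_ν² + Y_ν²` as a Fourier transform in `t`.

The Hankel transform `∫ x J₀(a x) K₀(b x) dx = 1 / (a² + b²)` gives, with `σ` the logistic function,
`∫ Φ_n(x) K₀(2 x sinh |t|) dx = ½ ∫₀^π sin(n u) (σ(2t + 2u) - σ(2t - 2u)) du`. The Fourier transform
in `t` of `σ(2t + 2u) - σ(2t - 2u)` at frequency `m` is `π sin(m u) / sinh(π m / 2)`, by the beta
integral and the reflection formula, so the orthogonality of the sines makes the kernels `Φ_n`
biorthogonal to the functions `J_ν² + Y_ν²`, `ν = i m / 2`. Integration term by term is justified by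
the bounds `Φ_n(x) = O(min(x, x^{-1/2}))` and `J_ν² + Y_ν² = O(x^{-3/4})`, the latter uniform in
`m`.
-/

section BesselClifford

/-- The entire Bessel–Clifford function `∑ₖ wᵏ / (k! Γ(ν + k + 1))`. It removes the branch point of
the Bessel function: `J_ν(x) = (x / 2) ^ ν * besselClifford ν (-(x² / 4))`. -/
noncomputable def besselClifford (ν w : ℂ) : ℂ :=
  ∑' k : ℕ, w ^ k / (k.factorial * Complex.Gamma (ν + k + 1))

lemma exists_norm_inv_Gamma_add_nat_le (ν : ℂ) :
    ∃ M : ℝ, ∀ k : ℕ, ‖(Complex.Gamma (ν + k + 1))⁻¹‖ ≤ M := by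
  obtain ⟨N, hN⟩ := exists_nat_ge ‖ν‖
  have eventually_le : ∀ k ≥ N,
      ‖(Complex.Gamma (ν + k + 1))⁻¹‖ ≤ ‖(Complex.Gamma (ν + N + 1))⁻¹‖ := by
    intro k hk
    induction k, hk using Nat.le_induction with
    | base => rfl
    | succ k hk ih =>
      have one_le : 1 ≤ ‖ν + k + 1‖ := by
        have triangle := norm_sub_norm_le ((k + 1 : ℕ) : ℂ) (-ν)
        rw [norm_neg, Complex.norm_natCast, sub_neg_eq_add] at triangle
        rw [show ν + k + 1 = ((k + 1 : ℕ) : ℂ) + ν by push_cast; ring]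
        have : (N : ℝ) ≤ k := by exact_mod_cast hk
        push_cast at triangle ⊢
        linarith
      rw [Complex.one_div_Gamma_eq_self_mul_one_div_Gamma_add_one, norm_mul] at ih
      push_cast
      rw [← add_assoc ν]
      exact (le_mul_of_one_le_left (norm_nonneg _) one_le).trans ih
  have bounded : IsBoundedUnder (· ≤ ·) atTop fun k : ℕ ↦ ‖(Complex.Gamma (ν + k + 1))⁻¹‖ :=
    isBoundedUnder_of_eventually_le ((eventually_ge_atTop N).mono eventually_le)
  exact bounded.bddAbove_range.imp fun M hM k ↦ hM ⟨k, rfl⟩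

lemma exists_norm_besselClifford_term_le (ν : ℂ) :
    ∃ M : ℝ, 0 ≤ M ∧ ∀ (k : ℕ) (w : ℂ),
      ‖w ^ k / (k.factorial * Complex.Gamma (ν + k + 1))‖ ≤ M * (‖w‖ ^ k / k.factorial) := by
  obtain ⟨M, hM⟩ := exists_norm_inv_Gamma_add_nat_le ν
  refine ⟨M, (norm_nonneg _).trans (hM 0), fun k w ↦ ?_⟩
  calc ‖w ^ k / (k.factorial * Complex.Gamma (ν + k + 1))‖
      = ‖(Complex.Gamma (ν + k + 1))⁻¹‖ * (‖w‖ ^ k / k.factorial) := by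
        rw [norm_div, norm_mul, norm_pow, norm_inv, Complex.norm_natCast]; ring
    _ ≤ M * (‖w‖ ^ k / k.factorial) := by gcongr; exact hM k

lemma summable_besselClifford (ν w : ℂ) :
    Summable fun k : ℕ ↦ w ^ k / (k.factorial * Complex.Gamma (ν + k + 1)) := by
  obtain ⟨M, -, hM⟩ := exists_norm_besselClifford_term_le ν
  exact .of_norm_bounded ((Real.summable_pow_div_factorial ‖w‖).mul_left M) fun k ↦ hM k w

lemma hasDerivAt_besselClifford (ν w : ℂ) :
    HasDerivAt (besselClifford ν) (besselClifford (ν + 1) w) w := by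
  obtain ⟨M, hM0, hM⟩ := exists_norm_besselClifford_term_le ν
  have summable := (Real.summable_pow_div_factorial (‖w‖ + 1)).mul_left M
  have bound : ∀ (k : ℕ), ∀ z ∈ Metric.ball (0 : ℂ) (‖w‖ + 1),
      ‖z ^ k / (k.factorial * Complex.Gamma (ν + k + 1))‖
        ≤ M * ((‖w‖ + 1) ^ k / k.factorial) := by
    intro k z hz
    have hz' : ‖z‖ ≤ ‖w‖ + 1 := (mem_ball_zero_iff.1 hz).le
    exact (hM k z).trans (by gcongr)
  have differentiable : ∀ k : ℕ, DifferentiableOn ℂ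
      (fun z : ℂ ↦ z ^ k / (k.factorial * Complex.Gamma (ν + k + 1)))
      (Metric.ball 0 (‖w‖ + 1)) := fun k ↦ by fun_prop
  have hw : w ∈ Metric.ball (0 : ℂ) (‖w‖ + 1) := by simp
  have hasSum_deriv :=
    Complex.hasSum_deriv_of_summable_norm summable differentiable Metric.isOpen_ball bound hw
  have deriv_eq : deriv (besselClifford ν) w = besselClifford (ν + 1) w := by
    have h := hasSum_deriv.tsum_eq
    rw [hasSum_deriv.summable.tsum_eq_zero_add] at h
    refine h.symm.trans ?_
    simp only [pow_zero, deriv_const, zero_add, besselClifford]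
    refine tsum_congr fun k ↦ ?_
    rw [deriv_div_const, deriv_pow_field, Nat.factorial_succ,
      show ν + (k + 1 : ℕ) + 1 = ν + 1 + k + 1 by push_cast; ring]
    push_cast
    rw [mul_assoc, mul_div_mul_left _ _ k.cast_add_one_ne_zero]
  rw [← deriv_eq]
  exact ((Complex.differentiableOn_tsum_of_summable_norm summable differentiable
    Metric.isOpen_ball bound).differentiableAt (Metric.isOpen_ball.mem_nhds hw)).hasDerivAt

lemma besselClifford_eq_add_mul (ν w : ℂ) :
    besselClifford ν w = (ν + 1) * besselClifford (ν + 1) w + w * besselClifford (ν + 2) w := by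
  have shift : HasSum (fun k : ℕ ↦ k * (w ^ k / (k.factorial * Complex.Gamma (ν + 1 + k + 1))))
      (w * besselClifford (ν + 2) w) := by
    rw [← add_zero (w * _), ← show ∑ k ∈ Finset.range 1,
        (k : ℂ) * (w ^ k / (k.factorial * Complex.Gamma (ν + 1 + k + 1))) = 0 by simp,
      ← hasSum_nat_add_iff]
    refine ((summable_besselClifford (ν + 2) w).hasSum.mul_left w).congr_fun fun k ↦ ?_
    rw [Nat.factorial_succ, show ν + 1 + (k + 1 : ℕ) + 1 = ν + 2 + k + 1 by push_cast; ring]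
    push_cast
    rw [mul_assoc (_ + 1), ← mul_div_assoc, mul_div_mul_left _ _ k.cast_add_one_ne_zero]
    ring
  refine HasSum.tsum_eq ((((summable_besselClifford (ν + 1) w).hasSum.mul_left
    (ν + 1)).add shift).congr_fun fun k ↦ ?_)
  rw [← div_div, div_eq_mul_inv _ (Complex.Gamma _),
    Complex.one_div_Gamma_eq_self_mul_one_div_Gamma_add_one,
    show ν + k + 1 + 1 = ν + 1 + k + 1 by ring]
  ring

lemma besselClifford_zero_right (ν : ℂ) :
    besselClifford ν 0 = (Complex.Gamma (ν + 1))⁻¹ := by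
  rw [besselClifford, tsum_eq_single 0 fun k hk ↦ by simp [hk]]
  simp

lemma neg_sq_div_four_pow (z : ℂ) (k : ℕ) :
    (-(z ^ 2 / 4)) ^ k = (-1) ^ k * (z / 2) ^ (2 * k) := by
  rw [pow_mul, ← mul_pow]
  ring

lemma besselJ_eq_exp_mul_besselClifford (ν : ℂ) {x : ℝ} (hx : 0 < x) :
    besselJ ν x = Complex.exp (ν * Real.log (x / 2)) * besselClifford ν (-(x ^ 2 / 4)) := by
  rw [besselJ, besselClifford, ← tsum_mul_left]
  refine tsum_congr fun k ↦ ?_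
  have exp_nat : Complex.exp (2 * k * Real.log (x / 2)) = (x / 2) ^ (2 * k) := by
    rw [mul_comm, show (2 * k : ℂ) = ((2 * k : ℕ) : ℂ) by push_cast; ring, mul_comm,
      Complex.exp_nat_mul, ← Complex.ofReal_exp, Real.exp_log (by positivity)]
    push_cast; ring
  rw [add_mul, Complex.exp_add, exp_nat, neg_sq_div_four_pow]
  ring

end BesselClifford

section BesselZeroOne

/-- The Bessel function of the first kind of order `1`. -/
noncomputable def besselJ1 (x : ℝ) : ℝ :=
  ∑' k : ℕ, (-1) ^ k * (x / 2) ^ (2 * k + 1) / (k.factorial * (k + 1).factorial)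

lemma ofReal_besselJ0 (x : ℝ) : (besselJ0 x : ℂ) = besselClifford 0 (-(x ^ 2 / 4)) := by
  rw [besselJ0, besselClifford, Complex.ofReal_tsum]
  refine tsum_congr fun k ↦ ?_
  rw [zero_add, Complex.Gamma_nat_eq_factorial, neg_sq_div_four_pow]
  push_cast
  ring

lemma ofReal_besselJ1 (x : ℝ) :
    (besselJ1 x : ℂ) = x / 2 * besselClifford 1 (-(x ^ 2 / 4)) := by
  rw [besselJ1, besselClifford, Complex.ofReal_tsum, ← tsum_mul_left]
  refine tsum_congr fun k ↦ ?_
  rw [show (1 : ℂ) + k + 1 = (k + 1 : ℕ) + 1 by push_cast; ring, Complex.Gamma_nat_eq_factorial,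
    neg_sq_div_four_pow, pow_succ]
  push_cast
  ring

@[simp] lemma besselJ0_zero : besselJ0 0 = 1 := by
  rw [besselJ0, tsum_eq_single 0 fun k hk ↦ by simp [hk]]
  simp

@[simp] lemma besselJ1_zero : besselJ1 0 = 0 := by simp [besselJ1]

lemma besselJ0_neg (x : ℝ) : besselJ0 (-x) = besselJ0 x := by
  simp only [besselJ0, neg_div, even_two_mul, Even.neg_pow]

lemma besselJ1_neg (x : ℝ) : besselJ1 (-x) = -besselJ1 x := by
  simp only [besselJ1, neg_div, (odd_two_mul_add_one _).neg_pow, mul_neg, tsum_neg]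

lemma hasDerivAt_besselClifford_neg_sq_div_four (ν : ℂ) (x : ℝ) :
    HasDerivAt (fun x : ℝ ↦ besselClifford ν (-(x ^ 2 / 4)))
      (-(x / 2) * besselClifford (ν + 1) (-(x ^ 2 / 4))) x := by
  have inner : HasDerivAt (fun z : ℂ ↦ -(z ^ 2 / 4)) (-(x / 2) : ℂ) x :=
    (((hasDerivAt_id (x : ℂ)).pow 2).div_const 4).neg.congr_deriv (by simp only [id]; ring)
  exact ((hasDerivAt_besselClifford ν _).comp (x : ℂ) inner).comp_ofReal.congr_deriv (mul_comm _ _)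

lemma hasDerivAt_of_hasDerivAt_ofReal {f : ℝ → ℝ} {f' x : ℝ}
    (h : HasDerivAt (fun x ↦ (f x : ℂ)) f' x) : HasDerivAt f f' x := by
  simpa [Function.comp_def] using Complex.reCLM.hasFDerivAt.comp_hasDerivAt x h

lemma hasDerivAt_besselJ0 (x : ℝ) : HasDerivAt besselJ0 (-besselJ1 x) x := by
  refine hasDerivAt_of_hasDerivAt_ofReal ?_
  simp only [ofReal_besselJ0, Complex.ofReal_neg, ofReal_besselJ1]
  exact (hasDerivAt_besselClifford_neg_sq_div_four 0 x).congr_deriv (by rw [zero_add]; ring)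

lemma hasDerivAt_mul_besselJ1 (x : ℝ) :
    HasDerivAt (fun x ↦ x * besselJ1 x) (x * besselJ0 x) x := by
  refine hasDerivAt_of_hasDerivAt_ofReal ?_
  simp only [Complex.ofReal_mul, ofReal_besselJ0, ofReal_besselJ1]
  have hx : HasDerivAt (fun x : ℝ ↦ (x : ℂ)) 1 x := Complex.ofRealCLM.hasDerivAt
  refine (hx.mul ((hx.div_const 2).mul
    (hasDerivAt_besselClifford_neg_sq_div_four 1 x))).congr_deriv ?_
  rw [besselClifford_eq_add_mul 0]
  norm_num
  ring

lemma hasDerivAt_besselJ1 {x : ℝ} (hx : x ≠ 0) :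
    HasDerivAt besselJ1 (besselJ0 x - besselJ1 x / x) x := by
  refine (((hasDerivAt_mul_besselJ1 x).div (hasDerivAt_id x) hx).congr_of_eventuallyEq
    ?_).congr_deriv (by simp only [id]; field_simp)
  filter_upwards [isOpen_ne.mem_nhds hx] with y hy
  simp only [id, Pi.div_apply]
  field_simp

lemma continuous_besselJ0 : Continuous besselJ0 :=
  continuous_iff_continuousAt.2 fun x ↦ (hasDerivAt_besselJ0 x).continuousAt

lemma continuous_besselJ1 : Continuous besselJ1 := by
  rw [← Complex.isometry_ofReal.comp_continuous_iff]
  simp only [Function.comp_def, ofReal_besselJ1]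
  have : Continuous fun x : ℝ ↦ besselClifford 1 (-(x ^ 2 / 4)) := continuous_iff_continuousAt.2
    fun x ↦ (hasDerivAt_besselClifford_neg_sq_div_four 1 x).continuousAt
  fun_prop

lemma besselJ0_sq_add_besselJ1_sq_le_one (x : ℝ) : besselJ0 x ^ 2 + besselJ1 x ^ 2 ≤ 1 := by
  wlog hx : 0 ≤ x generalizing x
  · simpa [besselJ0_neg, besselJ1_neg] using this (-x) (by linarith)
  have antitone : AntitoneOn (fun x ↦ besselJ0 x ^ 2 + besselJ1 x ^ 2) (Set.Ici 0) := by
    refine antitoneOn_of_hasDerivWithinAt_nonpos (f' := fun x ↦ -(2 * besselJ1 x ^ 2 / x))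
      (convex_Ici 0) ((continuous_besselJ0.pow 2).add (continuous_besselJ1.pow 2)).continuousOn
      (fun x hx ↦ ?_) (fun x hx ↦ ?_) <;>
    rw [interior_Ici, Set.mem_Ioi] at hx
    · refine ((((hasDerivAt_besselJ0 x).pow 2).add
        ((hasDerivAt_besselJ1 hx.ne').pow 2)).congr_deriv ?_).hasDerivWithinAt
      field_simp
      ring
    · exact neg_nonpos.2 (by positivity)
  simpa using antitone Set.self_mem_Ici hx hx

lemma abs_besselJ0_le_one (x : ℝ) : |besselJ0 x| ≤ 1 :=
  (sq_le_one_iff_abs_le_one _).1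
    (by linarith [besselJ0_sq_add_besselJ1_sq_le_one x, sq_nonneg (besselJ1 x)])

lemma abs_besselJ1_le_one (x : ℝ) : |besselJ1 x| ≤ 1 :=
  (sq_le_one_iff_abs_le_one _).1
    (by linarith [besselJ0_sq_add_besselJ1_sq_le_one x, sq_nonneg (besselJ0 x)])

/-- A Lyapunov function for Bessel's equation of order `0`: it decreases on `(0, ∞)` and dominates
`x * besselJ1 x ^ 2 / 2`, which gives the decay rate of `besselJ1`. -/
noncomputable def besselLyapunov (x : ℝ) : ℝ :=
  x * (besselJ0 x ^ 2 + besselJ1 x ^ 2) - besselJ0 x * besselJ1 x + besselJ0 x ^ 2 / (2 * x)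

lemma hasDerivAt_besselLyapunov {x : ℝ} (hx : x ≠ 0) :
    HasDerivAt besselLyapunov (-(besselJ0 x ^ 2 / (2 * x ^ 2))) x := by
  have h0 := hasDerivAt_besselJ0 x
  have h1 := hasDerivAt_besselJ1 hx
  refine ((((hasDerivAt_id x).mul ((h0.pow 2).add (h1.pow 2))).sub (h0.mul h1)).add
    ((h0.pow 2).div ((hasDerivAt_id x).const_mul 2) (mul_ne_zero two_ne_zero hx))).congr_deriv ?_
  simp only [Pi.add_apply, Pi.pow_apply, one_mul, id_eq, Nat.cast_ofNat, Nat.add_one_sub_one,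
    pow_one, mul_neg, neg_mul, mul_one]
  field_simp
  ring

lemma antitoneOn_besselLyapunov : AntitoneOn besselLyapunov (Set.Ioi 0) := by
  refine antitoneOn_of_hasDerivWithinAt_nonpos
    (f' := fun x ↦ -(besselJ0 x ^ 2 / (2 * x ^ 2))) (convex_Ioi 0)
    (fun x hx ↦ (hasDerivAt_besselLyapunov (ne_of_gt hx)).continuousAt.continuousWithinAt)
    (fun x hx ↦ ?_) (fun x _ ↦ neg_nonpos.2 (by positivity))
  rw [interior_Ioi] at hx
  exact (hasDerivAt_besselLyapunov (ne_of_gt hx)).hasDerivWithinAt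

lemma mul_besselJ1_sq_le_four {x : ℝ} (hx : 0 < x) : x * besselJ1 x ^ 2 ≤ 4 := by
  have bound := besselJ0_sq_add_besselJ1_sq_le_one
  obtain hx1 | hx1 := le_total x 1
  · nlinarith [bound x, sq_nonneg (besselJ0 x), sq_nonneg (besselJ1 x)]
  have le_lyapunov : x * besselJ1 x ^ 2 / 2 ≤ besselLyapunov x := by
    have : 0 ≤ besselJ0 x ^ 2 / (2 * x) := by positivity
    unfold besselLyapunov
    nlinarith [sq_nonneg (besselJ0 x - besselJ1 x), sq_nonneg (besselJ0 x),
      sq_nonneg (besselJ1 x)]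
  have lyapunov_one_le : besselLyapunov 1 ≤ 2 := by
    unfold besselLyapunov
    nlinarith [bound 1, sq_nonneg (besselJ0 1 + besselJ1 1), sq_nonneg (besselJ1 1)]
  linarith [antitoneOn_besselLyapunov (Set.mem_Ioi.2 one_pos) hx hx1]

lemma abs_besselJ1_le_two_div_sqrt {x : ℝ} (hx : 0 < x) : |besselJ1 x| ≤ 2 / √x := by
  refine abs_le_of_sq_le_sq ?_ (by positivity)
  rw [div_pow, Real.sq_sqrt hx.le, le_div_iff₀' hx]
  linarith [mul_besselJ1_sq_le_four hx]

end BesselZeroOne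

section MacdonaldIntegral

open Set

/-- The integrand of `macdonaldIntegral`. -/
noncomputable def macdonaldKernel (s a b : ℂ) (t : ℝ) : ℂ :=
  Complex.exp (s * t - a * Real.exp t - b * Real.exp (-t))

/-- The integral `∫ exp (s t - a eᵗ - b e⁻ᵗ) dt` over the real line. For `Re a, Re b > 0` it is the
Macdonald function `2 (b / a) ^ (s / 2) K_s(2 √(a b))`; the exponents `a` and `b` are kept apart
because products of such integrals are convolutions. -/
noncomputable def macdonaldIntegral (s a b : ℂ) : ℂ := ∫ t : ℝ, macdonaldKernel s a b t

lemma continuous_macdonaldKernel (s a b : ℂ) : Continuous (macdonaldKernel s a b) := by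
  unfold macdonaldKernel
  fun_prop

lemma norm_macdonaldKernel (s a b : ℂ) (t : ℝ) :
    ‖macdonaldKernel s a b t‖ =
      Real.exp (s.re * t - a.re * Real.exp t - b.re * Real.exp (-t)) := by
  rw [macdonaldKernel, Complex.norm_exp]
  simp only [Complex.sub_re, Complex.re_mul_ofReal]

lemma norm_macdonaldKernel_le_norm {s a b a' b' : ℂ} (ha : a'.re ≤ a.re) (hb : b'.re ≤ b.re)
    (t : ℝ) : ‖macdonaldKernel s a b t‖ ≤ ‖macdonaldKernel s a' b' t‖ := by
  simp only [norm_macdonaldKernel]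
  gcongr

lemma macdonaldKernel_neg (s a b : ℂ) (t : ℝ) :
    macdonaldKernel s a b (-t) = macdonaldKernel (-s) b a t := by
  simp only [macdonaldKernel, neg_neg]
  push_cast
  ring_nf

lemma macdonaldKernel_add_left (s s' a b : ℂ) (t : ℝ) :
    macdonaldKernel (s + s') a b t = Complex.exp (s' * t) * macdonaldKernel s a b t := by
  simp only [macdonaldKernel, ← Complex.exp_add]
  ring_nf

lemma integrable_macdonaldKernel (s : ℂ) {a b : ℂ} (ha : 0 < a.re) (hb : 0 < b.re) :
    Integrable (macdonaldKernel s a b) := by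
  set m := min a.re b.re
  have hm : 0 < m := lt_min ha hb
  refine (integrable_cexp_quadratic' (b := (-(m / 2) : ℝ)) (by simp [hm]) s 0).mono
    (continuous_macdonaldKernel s a b).aestronglyMeasurable (ae_of_all _ fun t ↦ ?_)
  rw [norm_macdonaldKernel, Complex.norm_exp, Real.exp_le_exp]
  have quadratic_le : m * (t ^ 2 / 2) ≤ a.re * Real.exp t + b.re * Real.exp (-t) := by
    have := (Real.quadratic_le_exp_of_nonneg (abs_nonneg t)).trans (Real.exp_abs_le t)
    nlinarith [abs_nonneg t, sq_abs t,
      mul_le_mul_of_nonneg_right (min_le_left a.re b.re) (Real.exp_nonneg t),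
      mul_le_mul_of_nonneg_right (min_le_right a.re b.re) (Real.exp_nonneg (-t))]
  have : (((-(m / 2) : ℝ) : ℂ) * (t : ℂ) ^ 2 + s * t + 0).re = -(m / 2) * t ^ 2 + s.re * t := by
    simp [← Complex.ofReal_pow]
  linarith

lemma macdonaldIntegral_neg (s a b : ℂ) : macdonaldIntegral (-s) a b = macdonaldIntegral s b a := by
  simp only [macdonaldIntegral, ← macdonaldKernel_neg]
  exact integral_neg_eq_self _ _

lemma macdonaldIntegral_mul_exp (s a b : ℂ) (c : ℝ) :
    macdonaldIntegral s (a * Real.exp c) (b * Real.exp (-c)) =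
      Complex.exp (-(s * c)) * macdonaldIntegral s a b := by
  have shift (t : ℝ) : macdonaldKernel s (a * Real.exp c) (b * Real.exp (-c)) t =
      Complex.exp (-(s * c)) * macdonaldKernel s a b (t + c) := by
    simp only [macdonaldKernel, neg_add, Real.exp_add, ← Complex.exp_add]
    push_cast
    ring_nf
  simp only [macdonaldIntegral, shift, integral_const_mul, integral_add_right_eq_self]

lemma hasDerivAt_macdonaldIntegral_left (s : ℂ) {a b : ℂ} (ha : 0 < a.re) (hb : 0 < b.re) :
    HasDerivAt (fun a ↦ macdonaldIntegral s a b) (-macdonaldIntegral (s + 1) a b) a := by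
  have half_pos : 0 < ((a.re / 2 : ℝ) : ℂ).re := by simpa using ha
  have nhds : {z : ℂ | a.re / 2 < z.re} ∈ 𝓝 a :=
    (isOpen_lt continuous_const Complex.continuous_re).mem_nhds (by simpa using ha)
  rw [macdonaldIntegral, ← integral_neg]
  refine (hasDerivAt_integral_of_dominated_loc_of_deriv_le nhds
    (bound := fun t ↦ ‖macdonaldKernel (s + 1) (a.re / 2 : ℝ) b t‖)
    (Eventually.of_forall fun z ↦ (continuous_macdonaldKernel s z b).aestronglyMeasurable)
    (integrable_macdonaldKernel s ha hb)
    (F' := fun z t ↦ -macdonaldKernel (s + 1) z b t)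
    (continuous_macdonaldKernel _ a b).neg.aestronglyMeasurable
    (ae_of_all _ fun t z hz ↦ ?_) (integrable_macdonaldKernel _ half_pos hb).norm
    (ae_of_all _ fun t z _ ↦ ?_)).2
  · rw [norm_neg]
    exact norm_macdonaldKernel_le_norm (by simpa using (mem_ofPred.1 hz).le) le_rfl t
  · rw [macdonaldKernel_add_left, one_mul, ← Complex.ofReal_exp]
    have exponent := (((hasDerivAt_id z).mul_const (Real.exp t : ℂ)).const_sub (s * t)).sub_const
      (b * Real.exp (-t))
    exact exponent.cexp.congr_deriv (by simp only [macdonaldKernel, id]; ring)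

lemma hasDerivAt_macdonaldIntegral_right (s : ℂ) {a b : ℂ} (ha : 0 < a.re) (hb : 0 < b.re) :
    HasDerivAt (fun b ↦ macdonaldIntegral s a b) (-macdonaldIntegral (s - 1) a b) b := by
  have h := hasDerivAt_macdonaldIntegral_left (-s) hb ha
  simp only [macdonaldIntegral_neg] at h
  rwa [show -s + 1 = -(s - 1) by ring, macdonaldIntegral_neg] at h

lemma mul_macdonaldIntegral (s : ℂ) {a b : ℂ} (ha : 0 < a.re) (hb : 0 < b.re) :
    s * macdonaldIntegral s a b =
      a * macdonaldIntegral (s + 1) a b - b * macdonaldIntegral (s - 1) a b := by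
  have int (s : ℂ) := integrable_macdonaldKernel s ha hb
  have deriv (t : ℝ) : HasDerivAt (macdonaldKernel s a b) (s * macdonaldKernel s a b t -
      a * macdonaldKernel (s + 1) a b t + b * macdonaldKernel (s + -1) a b t) t := by
    have exponent := (((Complex.ofRealCLM.hasDerivAt (x := t)).const_mul s).sub
      ((Real.hasDerivAt_exp t).ofReal_comp.const_mul a)).sub
      ((hasDerivAt_neg t).exp.ofReal_comp.const_mul b)
    refine exponent.cexp.congr_deriv ?_
    simp only [macdonaldKernel_add_left, one_mul, neg_mul, Complex.ofReal_exp, Complex.ofReal_neg]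
    simp only [Complex.ofRealCLM_apply, Pi.sub_apply, Complex.ofReal_one, mul_one, mul_neg,
      Complex.ofReal_neg, Complex.ofReal_exp, sub_neg_eq_add, macdonaldKernel]
    ring
  have key := integral_eq_zero_of_hasDerivAt_of_integrable deriv
    ((((int s).const_mul s).sub ((int (s + 1)).const_mul a)).add ((int (s + -1)).const_mul b))
    (int s)
  rw [integral_add (by exact ((int s).const_mul s).sub ((int (s + 1)).const_mul a))
    ((int (s + -1)).const_mul b), integral_sub ((int s).const_mul s) ((int (s + 1)).const_mul a)]
    at key
  simp only [integral_const_mul, ← sub_eq_add_neg] at key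
  simp only [macdonaldIntegral]
  linear_combination key

lemma macdonaldIntegral_mul_macdonaldIntegral (s : ℂ) {a b c d : ℂ} (ha : 0 < a.re)
    (hb : 0 < b.re) (hc : 0 < c.re) (hd : 0 < d.re) :
    macdonaldIntegral s a b * macdonaldIntegral s c d =
      ∫ t : ℝ, Complex.exp (s * t) *
        macdonaldIntegral 0 (a + d * Real.exp (-t)) (b + c * Real.exp t) := by
  have := integral_convolution (ContinuousLinearMap.mul ℂ ℂ)
    (integrable_macdonaldKernel s ha hb) (integrable_macdonaldKernel s hc hd)
  simp only [ContinuousLinearMap.mul_apply'] at this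
  rw [macdonaldIntegral, macdonaldIntegral, ← this]
  congr 1 with t
  rw [macdonaldIntegral, ← integral_const_mul]
  refine integral_congr_ae (ae_of_all _ fun r ↦ ?_)
  simp only [ContinuousLinearMap.mul_apply', macdonaldKernel, ← Complex.exp_add]
  simp only [neg_sub, Real.exp_sub, Real.exp_neg]
  push_cast
  congr 1
  ring

end MacdonaldIntegral

section MacdonaldWronskian

open Set

lemma abs_exp_smul_gammaIntegrand (s : ℂ) (t : ℝ) :
    |Real.exp t| • (((-Real.exp t).exp : ℂ) * (Real.exp t : ℂ) ^ (s - 1)) =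
      macdonaldKernel s 1 0 t := by
  rw [Complex.cpow_def_of_ne_zero (by exact_mod_cast (Real.exp_pos t).ne'), ← Complex.ofReal_log
    (Real.exp_pos t).le, Real.log_exp, Real.abs_exp, Complex.real_smul, macdonaldKernel,
    Complex.ofReal_exp (-Real.exp t), Complex.ofReal_exp t, ← Complex.exp_add, ← Complex.exp_add]
  push_cast
  ring_nf

lemma integrable_macdonaldKernel_one_zero {s : ℂ} (hs : 0 < s.re) :
    Integrable (macdonaldKernel s 1 0) := by
  have h := Complex.GammaIntegral_convergent hs
  rw [← Real.range_exp, ← image_univ, integrableOn_image_iff_integrableOn_abs_deriv_smul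
    MeasurableSet.univ (fun t _ ↦ (Real.hasDerivAt_exp t).hasDerivWithinAt)
    Real.exp_injective.injOn, integrableOn_univ] at h
  exact h.congr (ae_of_all _ (abs_exp_smul_gammaIntegrand s))

lemma macdonaldIntegral_one_zero {s : ℂ} (hs : 0 < s.re) :
    macdonaldIntegral s 1 0 = Complex.Gamma s := by
  rw [Complex.Gamma_eq_integral hs, Complex.GammaIntegral, ← Real.range_exp, ← image_univ,
    integral_image_eq_integral_abs_deriv_smul MeasurableSet.univ
    (fun t _ ↦ (Real.hasDerivAt_exp t).hasDerivWithinAt) Real.exp_injective.injOn]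
  simp only [abs_exp_smul_gammaIntegrand, setIntegral_univ, macdonaldIntegral]

lemma tendsto_macdonaldIntegral_one {s : ℂ} (hs : 0 < s.re) :
    Tendsto (macdonaldIntegral s 1) (𝓝[{z | 0 < z.re}] 0) (𝓝 (Complex.Gamma s)) := by
  rw [← macdonaldIntegral_one_zero hs]
  refine tendsto_integral_filter_of_dominated_convergence (fun t ↦ ‖macdonaldKernel s 1 0 t‖)
    (Eventually.of_forall fun z ↦ (continuous_macdonaldKernel s 1 z).aestronglyMeasurable) ?_
    (integrable_macdonaldKernel_one_zero hs).norm (ae_of_all _ fun t ↦ ?_)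
  · filter_upwards [self_mem_nhdsWithin] with z hz
    exact ae_of_all _ fun t ↦ norm_macdonaldKernel_le_norm le_rfl (le_of_lt hz) t
  · have : Continuous fun z ↦ macdonaldKernel s 1 z t := by
      unfold macdonaldKernel
      fun_prop
    exact this.continuousAt.mono_left nhdsWithin_le_nhds

/-- The Wronskian of `macdonaldIntegral s · b` and `besselClifford s (· * b)`, normalised by `aˢ` so
as to be constant. -/
noncomputable def macdonaldWronskian (s a b : ℂ) : ℂ :=
  Complex.exp (s * Complex.log a) * (macdonaldIntegral s a b * besselClifford (s - 1) (a * b) +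
    b * macdonaldIntegral (s - 1) a b * besselClifford s (a * b))

lemma besselClifford_sub_one (s z : ℂ) :
    besselClifford (s - 1) z = s * besselClifford s z + z * besselClifford (s + 1) z := by
  have := besselClifford_eq_add_mul (s - 1) z
  ring_nf at this ⊢
  exact this

lemma macdonaldWronskian_add_one (s : ℂ) {a b : ℂ} (ha : 0 < a.re) (hb : 0 < b.re) :
    macdonaldWronskian (s + 1) a b = macdonaldWronskian s a b := by
  have a_ne : a ≠ 0 := fun h ↦ by simp [h] at ha
  rw [macdonaldWronskian, macdonaldWronskian, add_sub_cancel_right, add_one_mul, Complex.exp_add,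
    Complex.exp_log a_ne, besselClifford_sub_one s]
  linear_combination -Complex.exp (s * Complex.log a) * besselClifford s (a * b) *
    mul_macdonaldIntegral s ha hb

lemma hasDerivAt_macdonaldWronskian (s : ℂ) {a b : ℂ} (ha : 0 < a.re) (hb : 0 < b.re) :
    HasDerivAt (fun a ↦ macdonaldWronskian s a b) 0 a := by
  have a_ne : a ≠ 0 := fun h ↦ by simp [h] at ha
  have power := ((Complex.hasDerivAt_log (Or.inl ha)).const_mul s).cexp
  have clifford (s : ℂ) := (hasDerivAt_besselClifford s (a * b)).comp a (hasDerivAt_mul_const b)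
  have macdonald (s : ℂ) := hasDerivAt_macdonaldIntegral_left s ha hb
  refine (power.mul (((macdonald s).mul (clifford (s - 1))).add
    (((macdonald (s - 1)).const_mul b).mul (clifford s)))).congr_deriv ?_
  simp only [Function.comp_apply, sub_add_cancel, Pi.mul_apply, Pi.add_apply]
  have recurrence := mul_macdonaldIntegral s ha hb
  rw [besselClifford_sub_one s]
  field_simp
  linear_combination Complex.exp (s * Complex.log a) *
    (s * besselClifford s (a * b) + a * b * besselClifford (s + 1) (a * b)) * recurrence

lemma macdonaldWronskian_ofReal (s b : ℂ) {ε : ℝ} (hε : 0 < ε) :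
    macdonaldWronskian s ε b = macdonaldWronskian s 1 (ε * b) := by
  have scale (s : ℂ) : macdonaldIntegral s 1 (ε * b) =
      Complex.exp (s * Real.log ε) * macdonaldIntegral s ε b := by
    have := macdonaldIntegral_mul_exp s ε b (-Real.log ε)
    rw [neg_neg, Real.exp_neg, Real.exp_log hε, mul_comm b] at this
    simpa [hε.ne'] using this
  simp only [macdonaldWronskian, scale, ← Complex.ofReal_log hε.le, Complex.log_one, one_mul,
    mul_zero, Complex.exp_zero, sub_mul, Complex.exp_sub]
  have ε_ne : (ε : ℂ) ≠ 0 := by exact_mod_cast hε.ne'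
  rw [← Complex.ofReal_exp (Real.log ε), Real.exp_log hε]
  field_simp

lemma tendsto_macdonaldWronskian_one {s : ℂ} (hs : 1 < s.re) :
    Tendsto (macdonaldWronskian s 1) (𝓝[{z | 0 < z.re}] 0) (𝓝 1) := by
  have clifford (ν : ℂ) : Tendsto (besselClifford ν) (𝓝[{z | 0 < z.re}] 0)
      (𝓝 (Complex.Gamma (ν + 1))⁻¹) := by
    rw [← besselClifford_zero_right]
    exact (hasDerivAt_besselClifford ν 0).continuousAt.mono_left nhdsWithin_le_nhds
  have id : Tendsto (fun z : ℂ ↦ z) (𝓝[{z | 0 < z.re}] 0) (𝓝 0) := nhdsWithin_le_nhds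
  have lim := ((tendsto_macdonaldIntegral_one (s := s) (by linarith)).mul (clifford (s - 1))).add
    ((id.mul (tendsto_macdonaldIntegral_one (s := s - 1) (by simpa using hs))).mul (clifford s))
  have Gamma_ne : Complex.Gamma s ≠ 0 := Complex.Gamma_ne_zero_of_re_pos (by linarith)
  change Tendsto (fun z ↦ macdonaldWronskian s 1 z) _ _
  simpa [macdonaldWronskian, Gamma_ne] using lim

lemma macdonaldWronskian_eq_one_of_one_lt_re {s a b : ℂ} (hs : 1 < s.re) (ha : 0 < a.re)
    (hb : 0 < b.re) : macdonaldWronskian s a b = 1 := by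
  have const {ε : ℝ} (hε : 0 < ε) : macdonaldWronskian s 1 (ε * b) = macdonaldWronskian s a b := by
    rw [← macdonaldWronskian_ofReal s b hε]
    refine (isOpen_lt continuous_const Complex.continuous_re).is_const_of_deriv_eq_zero
      (convex_halfSpace_re_gt 0).isPreconnected
      (fun z hz ↦ (hasDerivAt_macdonaldWronskian s hz hb).differentiableAt.differentiableWithinAt)
      (fun z hz ↦ (hasDerivAt_macdonaldWronskian s hz hb).deriv) (by simpa using hε) ha
  have scale : Tendsto (fun ε : ℝ ↦ ε * b) (𝓝[>] 0) (𝓝[{z | 0 < z.re}] 0) := by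
    refine tendsto_nhdsWithin_iff.2 ⟨?_, ?_⟩
    · have : Continuous fun ε : ℝ ↦ ε * b := by fun_prop
      simpa using (this.tendsto 0).mono_left nhdsWithin_le_nhds
    · filter_upwards [self_mem_nhdsWithin] with ε hε
      simpa using mul_pos hε hb
  refine tendsto_nhds_unique (tendsto_const_nhds.congr' ?_)
    ((tendsto_macdonaldWronskian_one hs).comp scale)
  filter_upwards [self_mem_nhdsWithin] with ε hε using (const hε).symm

lemma macdonaldWronskian_eq_one (s : ℂ) {a b : ℂ} (ha : 0 < a.re) (hb : 0 < b.re) :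
    macdonaldWronskian s a b = 1 := by
  have shift (n : ℕ) : macdonaldWronskian (s + n) a b = macdonaldWronskian s a b := by
    induction n with
    | zero => simp
    | succ n ih => rw [Nat.cast_succ, ← add_assoc, macdonaldWronskian_add_one _ ha hb, ih]
  obtain ⟨n, hn⟩ := exists_nat_gt (1 - s.re)
  rw [← shift n]
  exact macdonaldWronskian_eq_one_of_one_lt_re (by simpa [sub_lt_iff_lt_add'] using hn) ha hb

lemma besselClifford_mul_sub_mul (s z : ℂ) :
    z * besselClifford (s + 1) z * besselClifford (-s) z -
      besselClifford s z * besselClifford (-s - 1) z = Complex.sin (Real.pi * s) / Real.pi := by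
  have deriv (z : ℂ) : HasDerivAt (fun z ↦ z * besselClifford (s + 1) z * besselClifford (-s) z -
      besselClifford s z * besselClifford (-s - 1) z) 0 z := by
    have h (ν : ℂ) := hasDerivAt_besselClifford ν z
    refine ((((hasDerivAt_id z).mul (h (s + 1))).mul (h (-s))).sub
      ((h s).mul (h (-s - 1)))).congr_deriv ?_
    have up := besselClifford_eq_add_mul s z
    simp only [id, Pi.mul_apply, besselClifford_sub_one (-s), sub_add_cancel, add_assoc,
      one_add_one_eq_two]
    linear_combination -besselClifford (-s) z * up
  rw [is_const_of_deriv_eq_zero (fun z ↦ (deriv z).differentiableAt) (fun z ↦ (deriv z).deriv) z 0]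
  have reflection := Complex.Gamma_mul_Gamma_one_sub (s + 1)
  rw [mul_add, mul_one, Complex.sin_add_pi, sub_add_cancel_right] at reflection
  rw [zero_mul, zero_mul, zero_sub, besselClifford_zero_right, besselClifford_zero_right,
    sub_add_cancel, ← mul_inv, reflection, inv_div, neg_div, neg_neg]

/-- The connection formula `K_s = (π / 2) (I_{-s} - I_s) / sin π s`. -/
lemma sin_mul_macdonaldIntegral (s : ℂ) {a b : ℂ} (ha : 0 < a.re) (hb : 0 < b.re) :
    Complex.sin (Real.pi * s) / Real.pi * macdonaldIntegral s a b =
      Complex.exp (-(s * Complex.log a)) * besselClifford (-s) (a * b) -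
        Complex.exp (s * Complex.log b) * besselClifford s (a * b) := by
  have a_ne : a ≠ 0 := fun h ↦ by simp [h] at ha
  have w₁ := macdonaldWronskian_eq_one (s + 1) ha hb
  have w₂ := macdonaldWronskian_eq_one (-s) hb ha
  rw [macdonaldWronskian, add_sub_cancel_right, add_one_mul, Complex.exp_add,
    Complex.exp_log a_ne] at w₁
  rw [macdonaldWronskian, macdonaldIntegral_neg, show -s - 1 = -(s + 1) by ring,
    macdonaldIntegral_neg, mul_comm b a, neg_mul] at w₂
  have exp_a := Complex.exp_neg (s * Complex.log a)
  have exp_b := Complex.exp_neg (s * Complex.log b)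
  have ha' := Complex.exp_ne_zero (s * Complex.log a)
  have hb' := Complex.exp_ne_zero (s * Complex.log b)
  rw [← besselClifford_mul_sub_mul s (a * b), show -s - 1 = -(s + 1) by ring]
  rw [exp_a]
  rw [exp_b] at w₂
  field_simp at w₁ w₂ ⊢
  linear_combination besselClifford (-s) (a * b) * w₁ -
    Complex.exp (s * Complex.log a) * besselClifford s (a * b) * w₂

end MacdonaldWronskian

section MacdonaldScaling

open Set

lemma macdonaldIntegral_eq_exp_mul_of_pos (s a : ℂ) {b : ℝ} (hb : 0 < b) :
    macdonaldIntegral s a b =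
      Complex.exp (s * Complex.log b) * macdonaldIntegral s (a * b) 1 := by
  have h := macdonaldIntegral_mul_exp s a b (Real.log b)
  rw [Real.exp_neg, Real.exp_log hb, ← Complex.ofReal_mul, mul_inv_cancel₀ hb.ne',
    Complex.ofReal_one, Complex.ofReal_log hb.le] at h
  rw [h, ← mul_assoc, ← Complex.exp_add, add_neg_cancel, Complex.exp_zero, one_mul]

/-- The identity theorem extends the scaling relation from positive real `b` to complex `b`. -/
lemma macdonaldIntegral_eq_exp_mul (s : ℂ) {a b : ℂ} (ha : 0 < a.re) (hb : 0 < b.re)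
    (hab : 0 < (a * b).re) :
    macdonaldIntegral s a b =
      Complex.exp (s * Complex.log b) * macdonaldIntegral s (a * b) 1 := by
  let U : Set ℂ := {w | 0 < w.re} ∩ {w | 0 < (a * w).re}
  have open_U : IsOpen U := (isOpen_lt continuous_const Complex.continuous_re).inter
    (isOpen_lt continuous_const (by fun_prop))
  have convex : Convex ℝ U := (convex_halfSpace_re_gt 0).inter
    ((convex_halfSpace_re_gt 0).linear_preimage (LinearMap.mulLeft ℝ a))
  have analytic_left : AnalyticOnNhd ℂ (macdonaldIntegral s a) U :=
    DifferentiableOn.analyticOnNhd (fun w hw ↦ (hasDerivAt_macdonaldIntegral_right s ha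
      hw.1).differentiableAt.differentiableWithinAt) open_U
  have analytic_right : AnalyticOnNhd ℂ
      (fun w ↦ Complex.exp (s * Complex.log w) * macdonaldIntegral s (a * w) 1) U := by
    refine DifferentiableOn.analyticOnNhd (fun w hw ↦ ?_) open_U
    have exp_log := ((Complex.hasDerivAt_log (.inl hw.1)).const_mul s).cexp
    have scaled := (hasDerivAt_macdonaldIntegral_left s hw.2 (b := 1) (by simp)).comp w
      ((hasDerivAt_id w).const_mul a)
    exact (exp_log.mul scaled).differentiableAt.differentiableWithinAt
  have one_mem : (1 : ℂ) ∈ U := ⟨by simp, by simpa using ha⟩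
  refine analytic_left.eqOn_of_preconnected_of_frequently_eq analytic_right
    convex.isPreconnected one_mem ?_ ⟨hb, hab⟩
  have to_one : Tendsto (fun r : ℝ ↦ (r : ℂ)) (𝓝[>] 1) (𝓝[≠] 1) := by
    refine tendsto_nhdsWithin_iff.2 ⟨?_, ?_⟩
    · simpa using (Complex.continuous_ofReal.tendsto 1).mono_left nhdsWithin_le_nhds
    · filter_upwards [self_mem_nhdsWithin] with r hr
      simpa using (ne_of_gt hr)
  refine to_one.frequently (Eventually.frequently ?_)
  filter_upwards [self_mem_nhdsWithin] with r hr
  exact macdonaldIntegral_eq_exp_mul_of_pos s a (zero_lt_one.trans hr)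

end MacdonaldScaling

section BesselK

open Set

/-- The modified Bessel function `K_s(x)` of the second kind, of real order `s`, for `x > 0`. -/
noncomputable def besselK (s x : ℝ) : ℝ :=
  2⁻¹ * ∫ t : ℝ, Real.exp (s * t - x * Real.cosh t)

lemma ofReal_exp_sub_mul_cosh (s x t : ℝ) :
    (Real.exp (s * t - x * Real.cosh t) : ℂ) = macdonaldKernel s (x / 2) (x / 2) t := by
  rw [macdonaldKernel, Real.cosh_eq]
  push_cast
  ring_nf

lemma ofReal_besselK (s x : ℝ) :
    (besselK s x : ℂ) = 2⁻¹ * macdonaldIntegral s (x / 2) (x / 2) := by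
  simp only [besselK, Complex.ofReal_mul, ← integral_complex_ofReal, ofReal_exp_sub_mul_cosh,
    macdonaldIntegral, Complex.ofReal_inv, Complex.ofReal_ofNat]

lemma integrable_exp_sub_mul_cosh (s : ℝ) {x : ℝ} (hx : 0 < x) :
    Integrable fun t ↦ Real.exp (s * t - x * Real.cosh t) := by
  have h : 0 < ((x : ℂ) / 2).re := by simpa using hx
  refine (integrable_macdonaldKernel s h h).norm.congr (ae_of_all _ fun t ↦ ?_)
  simp only [← ofReal_exp_sub_mul_cosh, Complex.norm_real, Real.norm_eq_abs, Real.abs_exp]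

lemma besselK_nonneg (s x : ℝ) : 0 ≤ besselK s x :=
  mul_nonneg (by norm_num) (integral_nonneg fun _ ↦ (Real.exp_pos _).le)

lemma antitoneOn_besselK (s : ℝ) : AntitoneOn (besselK s) (Ioi 0) := by
  intro x hx y hy hxy
  refine mul_le_mul_of_nonneg_left (integral_mono (integrable_exp_sub_mul_cosh s hy)
    (integrable_exp_sub_mul_cosh s hx) fun t ↦ ?_) (by norm_num)
  simp only
  gcongr

lemma integral_norm_macdonaldKernel_zero {p c : ℝ} (hp : 0 < p) (hc : 0 < c) :
    ∫ t, ‖macdonaldKernel p c 0 t‖ = Real.Gamma p / c ^ p := by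
  have real (t : ℝ) : macdonaldKernel p c 0 t = (‖macdonaldKernel p c 0 t‖ : ℂ) := by
    rw [norm_macdonaldKernel, macdonaldKernel]
    simp
  have h := macdonaldIntegral_mul_exp p 1 0 (Real.log c)
  rw [macdonaldIntegral_one_zero (by simpa), Real.exp_log hc, one_mul, zero_mul,
    macdonaldIntegral, integral_congr_ae (ae_of_all _ real), integral_complex_ofReal] at h
  have : ∫ t, ‖macdonaldKernel p c 0 t‖ = Real.exp (-(p * Real.log c)) * Real.Gamma p := by
    rw [Complex.Gamma_ofReal] at h
    exact_mod_cast h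
  rw [this, Real.rpow_def_of_pos hc, Real.exp_neg, mul_comm (Real.log c)]
  ring

/-- Bounding `cosh t` below by `e^{|t|} / 2` turns the integral into Euler's integral for `Γ`. -/
lemma besselK_le {s p x : ℝ} (hp : 0 < p) (hs : |s| ≤ p) (hx : 0 < x) :
    besselK s x ≤ Real.Gamma p / (x / 2) ^ p := by
  have int : Integrable fun t ↦ ‖macdonaldKernel p (x / 2 : ℝ) 0 t‖ :=
    .of_integral_ne_zero (by
      rw [integral_norm_macdonaldKernel_zero hp (by positivity)]
      have := Real.Gamma_pos_of_pos hp
      positivity)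
  have le (t : ℝ) : Real.exp (s * t - x * Real.cosh t) ≤
      ‖macdonaldKernel p (x / 2 : ℝ) 0 t‖ + ‖macdonaldKernel p (x / 2 : ℝ) 0 (-t)‖ := by
    have exponent_le {u : ℝ} (hu : s * t ≤ p * u) (hu' : Real.exp u ≤ 2 * Real.cosh t) :
        Real.exp (s * t - x * Real.cosh t) ≤ ‖macdonaldKernel p (x / 2 : ℝ) 0 u‖ := by
      rw [norm_macdonaldKernel, Real.exp_le_exp]
      simp only [Complex.ofReal_re, Complex.zero_re, zero_mul, sub_zero]
      nlinarith
    have st_le : s * t ≤ p * |t| := (le_abs_self _).trans (by rw [abs_mul]; gcongr)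
    have two_cosh : 2 * Real.cosh t = Real.exp t + Real.exp (-t) := by rw [Real.cosh_eq]; ring
    rcases abs_choice t with h | h <;> rw [h] at st_le
    · refine (exponent_le st_le ?_).trans (le_add_of_nonneg_right (norm_nonneg _))
      exact two_cosh ▸ le_add_of_nonneg_right (Real.exp_pos _).le
    · refine (exponent_le st_le ?_).trans (le_add_of_nonneg_left (norm_nonneg _))
      exact two_cosh ▸ le_add_of_nonneg_left (Real.exp_pos _).le
  calc besselK s x
    _ ≤ 2⁻¹ * ∫ t, (‖macdonaldKernel p (x / 2 : ℝ) 0 t‖ +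
        ‖macdonaldKernel p (x / 2 : ℝ) 0 (-t)‖) := by
      refine mul_le_mul_of_nonneg_left (integral_mono (integrable_exp_sub_mul_cosh s hx)
        (int.add int.comp_neg) le) (by norm_num)
    _ = Real.Gamma p / (x / 2) ^ p := by
      rw [integral_add int int.comp_neg, integral_neg_eq_self
        (fun t ↦ ‖macdonaldKernel p (x / 2 : ℝ) 0 t‖), integral_norm_macdonaldKernel_zero hp
        (by positivity)]
      ring

lemma ofReal_besselK_eq_exp_mul (s : ℝ) {x : ℝ} (hx : 0 < x) :
    (besselK s x : ℂ) =
      2⁻¹ * (Real.exp (-(s * Real.log (x / 2))) * macdonaldIntegral s 1 (x ^ 2 / 4 : ℝ)) := by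
  have pos : 0 < ((x : ℂ) / 2).re := by simpa using hx
  have h := macdonaldIntegral_eq_exp_mul (-s) pos pos (by
    rw [← sq, div_pow, ← Complex.ofReal_ofNat, ← Complex.ofReal_pow, ← Complex.ofReal_pow,
      ← Complex.ofReal_div, Complex.ofReal_re]
    positivity)
  rw [macdonaldIntegral_neg, macdonaldIntegral_neg] at h
  rw [ofReal_besselK, h, neg_mul]
  push_cast
  rw [Complex.ofReal_log (by positivity)]
  push_cast
  ring_nf

lemma ofReal_besselK_zero {x : ℝ} (hx : 0 < x) :
    (besselK 0 x : ℂ) = 2⁻¹ * macdonaldIntegral 0 1 (x ^ 2 / 4 : ℝ) := by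
  simp [ofReal_besselK_eq_exp_mul 0 hx]

lemma ofReal_mul_besselK_one {x : ℝ} (hx : 0 < x) :
    ((x * besselK 1 x : ℝ) : ℂ) = macdonaldIntegral 1 1 (x ^ 2 / 4 : ℝ) := by
  rw [Complex.ofReal_mul, ofReal_besselK_eq_exp_mul 1 hx, one_mul, Real.exp_neg,
    Real.exp_log (by positivity)]
  have : (x : ℂ) ≠ 0 := by exact_mod_cast hx.ne'
  push_cast
  field_simp

lemma hasDerivAt_macdonaldIntegral_sq_div_four (s : ℂ) {x : ℝ} (hx : 0 < x) :
    HasDerivAt (fun x : ℝ ↦ macdonaldIntegral s 1 (x ^ 2 / 4 : ℝ))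
      (-(x / 2) * macdonaldIntegral (s - 1) 1 (x ^ 2 / 4 : ℝ)) x := by
  have inner : HasDerivAt (fun x : ℝ ↦ ((x ^ 2 / 4 : ℝ) : ℂ)) (x / 2 : ℝ) x :=
    (((hasDerivAt_pow 2 x).div_const 4).congr_deriv (by ring)).ofReal_comp
  refine ((hasDerivAt_macdonaldIntegral_right s (a := 1) (by simp) ?_).comp x inner).congr_deriv ?_
  · rw [Complex.ofReal_re]
    positivity
  · push_cast
    ring

lemma hasDerivAt_besselK_zero {x : ℝ} (hx : 0 < x) : HasDerivAt (besselK 0) (-besselK 1 x) x := by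
  refine hasDerivAt_of_hasDerivAt_ofReal (((hasDerivAt_macdonaldIntegral_sq_div_four 0 hx).const_mul
    2⁻¹).congr_of_eventuallyEq ?_ |>.congr_deriv ?_)
  · filter_upwards [lt_mem_nhds hx] with y hy using ofReal_besselK_zero hy
  · have x_ne : (x : ℂ) ≠ 0 := by exact_mod_cast hx.ne'
    have recurrence := mul_macdonaldIntegral 0 (a := 1) (b := (x ^ 2 / 4 : ℝ)) (by simp)
      (by rw [Complex.ofReal_re]; positivity)
    have K_one := ofReal_mul_besselK_one hx
    rw [zero_mul, zero_add, ← K_one] at recurrence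
    push_cast at recurrence ⊢
    refine mul_left_cancel₀ x_ne ?_
    linear_combination -recurrence

lemma hasDerivAt_mul_besselK_one {x : ℝ} (hx : 0 < x) :
    HasDerivAt (fun x ↦ x * besselK 1 x) (-(x * besselK 0 x)) x := by
  refine hasDerivAt_of_hasDerivAt_ofReal ((hasDerivAt_macdonaldIntegral_sq_div_four 1
    hx).congr_of_eventuallyEq ?_ |>.congr_deriv ?_)
  · filter_upwards [lt_mem_nhds hx] with y hy using ofReal_mul_besselK_one hy
  · rw [sub_self, Complex.ofReal_neg, Complex.ofReal_mul, ofReal_besselK_zero hx]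
    ring

lemma tendsto_mul_besselK_one : Tendsto (fun x ↦ x * besselK 1 x) (𝓝[>] 0) (𝓝 1) := by
  have inner : Tendsto (fun x : ℝ ↦ ((x ^ 2 / 4 : ℝ) : ℂ)) (𝓝[>] 0) (𝓝[{z | 0 < z.re}] 0) := by
    refine tendsto_nhdsWithin_iff.2 ⟨?_, ?_⟩
    · have : Continuous fun x : ℝ ↦ ((x ^ 2 / 4 : ℝ) : ℂ) := by fun_prop
      simpa using (this.tendsto 0).mono_left nhdsWithin_le_nhds
    · filter_upwards [self_mem_nhdsWithin] with x hx
      rw [Complex.ofReal_re]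
      exact div_pos (pow_pos hx 2) (by norm_num)
  have h := (tendsto_macdonaldIntegral_one (s := 1) (by simp)).comp inner
  rw [Complex.Gamma_one] at h
  refine ((Complex.continuous_re.tendsto 1).comp h).congr' ?_
  filter_upwards [self_mem_nhdsWithin] with x hx
  simp only [Function.comp_apply, ← ofReal_mul_besselK_one hx, Complex.ofReal_re]

lemma continuousOn_besselK_zero : ContinuousOn (besselK 0) (Ioi 0) := fun _ hx ↦
  (hasDerivAt_besselK_zero hx).continuousAt.continuousWithinAt

end BesselK

section Integrability

open Set

lemma integrable_comp_abs {E : Type*} [NormedAddCommGroup E] {f : ℝ → E}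
    (hf : IntegrableOn f (Ioi 0)) : Integrable fun t ↦ f |t| := by
  have right : IntegrableOn (fun t ↦ f |t|) (Ioi 0) :=
    hf.congr_fun (fun t ht ↦ by rw [abs_of_pos ht]) measurableSet_Ioi
  have left : IntegrableOn (fun t ↦ f |t|) (Iic 0) := by
    have := right.comp_neg
    simp only [abs_neg, neg_Ioi, neg_zero] at this
    rwa [integrableOn_Iic_iff_integrableOn_Iio]
  rw [← integrableOn_univ, ← Iic_union_Ioi (a := (0 : ℝ))]
  exact left.union right

lemma integrableOn_Ioi_of_norm_le_rpow {E : Type*} [NormedAddCommGroup E] {f : ℝ → E}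
    {a b A B : ℝ} (hf : AEStronglyMeasurable f (volume.restrict (Ioi 0))) (ha : -1 < a)
    (hb : b < -1) (h_zero : ∀ x ∈ Ioc (0 : ℝ) 1, ‖f x‖ ≤ A * x ^ a)
    (h_infty : ∀ x ∈ Ioi (1 : ℝ), ‖f x‖ ≤ B * x ^ b) : IntegrableOn f (Ioi 0) := by
  rw [← Ioc_union_Ioi_eq_Ioi zero_le_one] at hf ⊢
  rw [aestronglyMeasurable_union_iff] at hf
  have int_zero : IntegrableOn (fun x : ℝ ↦ x ^ a) (Ioc 0 1) :=
    (intervalIntegrable_iff_integrableOn_Ioc_of_le zero_le_one).1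
      (intervalIntegral.intervalIntegrable_rpow' ha)
  have int_infty : IntegrableOn (fun x : ℝ ↦ x ^ b) (Ioi 1) :=
    (integrableOn_Ioi_rpow_iff zero_lt_one).2 hb
  exact .union
    ((int_zero.const_mul A).mono' hf.1 (ae_restrict_of_forall_mem measurableSet_Ioc h_zero))
    ((int_infty.const_mul B).mono' hf.2 (ae_restrict_of_forall_mem measurableSet_Ioi h_infty))

lemma exp_le_four_mul_sinh {t : ℝ} (ht : 1 ≤ t) : Real.exp t ≤ 4 * Real.sinh t := by
  have two_le : 2 ≤ Real.exp t := by linarith [Real.add_one_le_exp t]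
  have : Real.exp (-t) ≤ 1 := Real.exp_le_one_iff.2 (by linarith)
  rw [Real.sinh_eq]
  linarith

lemma sinh_rpow_neg_le_rpow_neg {q t : ℝ} (hq : 0 ≤ q) (ht : 0 < t) :
    Real.sinh t ^ (-q) ≤ t ^ (-q) :=
  Real.rpow_le_rpow_of_nonpos ht (Real.self_le_sinh_iff.2 ht.le) (neg_nonpos.2 hq)

lemma exp_mul_sinh_rpow_neg_le {c q t : ℝ} (hq : 0 ≤ q) (hcq : c < q) (ht : 1 ≤ t) :
    Real.exp (c * t) * Real.sinh t ^ (-q) ≤ 2 * 4 ^ q / (q - c) ^ 2 * t ^ (-2 : ℝ) := by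
  have t_pos : 0 < t := by linarith
  have sub_pos := sub_pos.2 hcq
  have sinh_rpow_le : Real.sinh t ^ (-q) ≤ 4 ^ q * Real.exp (-(q * t)) := by
    rw [Real.rpow_neg (Real.sinh_nonneg_iff.2 t_pos.le), Real.exp_neg, mul_comm q,
      Real.exp_mul, ← div_eq_mul_inv, ← inv_div, ← Real.div_rpow (Real.exp_pos t).le (by norm_num)]
    gcongr
    linarith [exp_le_four_mul_sinh ht]
  have quadratic_le := Real.quadratic_le_exp_of_nonneg (mul_pos sub_pos t_pos).le
  calc Real.exp (c * t) * Real.sinh t ^ (-q)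
    _ ≤ Real.exp (c * t) * (4 ^ q * Real.exp (-(q * t))) := by gcongr
    _ = 4 ^ q * (Real.exp ((q - c) * t))⁻¹ := by
      rw [mul_left_comm, ← Real.exp_add, ← Real.exp_neg]
      ring_nf
    _ ≤ 4 ^ q * (((q - c) * t) ^ 2 / 2)⁻¹ := by
      gcongr
      nlinarith [mul_pos sub_pos t_pos]
    _ = 2 * 4 ^ q / (q - c) ^ 2 * t ^ (-2 : ℝ) := by
      rw [Real.rpow_neg t_pos.le, Real.rpow_two]
      field_simp

lemma integrable_sinh_abs_rpow_neg {p : ℝ} (hp : 0 < p) (hp' : p < 1) :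
    Integrable fun t ↦ Real.sinh |t| ^ (-p) := by
  refine integrable_comp_abs (f := fun t ↦ Real.sinh t ^ (-p))
    (integrableOn_Ioi_of_norm_le_rpow (a := -p) (b := -2) (A := 1) (B := 2 * 4 ^ p / (p - 0) ^ 2)
    ?_ (by linarith) (by norm_num) (fun t ht ↦ ?_) (fun t ht ↦ ?_))
  · exact (Real.continuous_sinh.continuousOn.rpow_const fun t ht ↦
      .inl (Real.sinh_pos_iff.2 ht).ne').aestronglyMeasurable measurableSet_Ioi
  · rw [Real.norm_of_nonneg (Real.rpow_nonneg (Real.sinh_nonneg_iff.2 ht.1.le) _), one_mul]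
    exact sinh_rpow_neg_le_rpow_neg hp.le ht.1
  · rw [Real.norm_of_nonneg
      (Real.rpow_nonneg (Real.sinh_nonneg_iff.2 (zero_le_one.trans (le_of_lt ht))) _)]
    simpa using exp_mul_sinh_rpow_neg_le hp.le hp (le_of_lt ht)

end Integrability

section Nicholson

open Set

lemma besselK_zero_two_mul_mul_sinh_le {p x t : ℝ} (hp : 0 < p) (hx : 0 < x) (ht : 0 < t) :
    besselK 0 (2 * x * Real.sinh t) ≤ Real.Gamma p * x ^ (-p) * Real.sinh t ^ (-p) := by
  have sinh_pos := Real.sinh_pos_iff.2 ht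
  refine (besselK_le hp (by simpa using hp.le) (by positivity)).trans_eq ?_
  rw [mul_assoc 2, mul_div_cancel_left₀ _ two_ne_zero, Real.mul_rpow hx.le sinh_pos.le,
    Real.rpow_neg hx.le, Real.rpow_neg sinh_pos.le]
  field_simp

lemma continuousOn_besselK_zero_sinh {x : ℝ} (hx : 0 < x) :
    ContinuousOn (fun t ↦ besselK 0 (2 * x * Real.sinh t)) (Ioi 0) := by
  refine continuousOn_besselK_zero.comp (by fun_prop) fun t ht ↦ ?_
  have := Real.sinh_pos_iff.2 ht
  rw [mem_Ioi]
  positivity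

lemma integrable_exp_mul_besselK_zero_sinh {c x : ℝ} (hc : 0 ≤ c) (hx : 0 < x) :
    Integrable fun t ↦ Real.exp (c * |t|) * besselK 0 (2 * x * Real.sinh |t|) := by
  refine integrable_comp_abs
    (f := fun t ↦ Real.exp (c * t) * besselK 0 (2 * x * Real.sinh t))
    (integrableOn_Ioi_of_norm_le_rpow (a := -(1 / 2)) (b := -2)
    (A := Real.exp c * (Real.Gamma (1 / 2) * x ^ (-(1 / 2) : ℝ)))
    (B := Real.Gamma (c + 1) * x ^ (-(c + 1)) * (2 * 4 ^ (c + 1) / (c + 1 - c) ^ 2))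
    ?_ (by norm_num) (by norm_num) (fun t ht ↦ ?_) (fun t ht ↦ ?_))
  · exact ((Real.continuous_exp.comp (continuous_const_mul c)).continuousOn.mul
      (continuousOn_besselK_zero_sinh hx)).aestronglyMeasurable measurableSet_Ioi
  all_goals rw [Real.norm_of_nonneg (mul_nonneg (Real.exp_pos _).le (besselK_nonneg _ _))]
  · have _gamma_pos := Real.Gamma_pos_of_pos (s := 1 / 2) (by norm_num)
    rw [mul_assoc (Real.exp c)]
    gcongr
    · exact besselK_nonneg _ _
    · exact mul_le_of_le_one_right hc ht.2
    · refine (besselK_zero_two_mul_mul_sinh_le (p := 1 / 2) (by norm_num) hx ht.1).trans ?_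
      exact mul_le_mul_of_nonneg_left (sinh_rpow_neg_le_rpow_neg one_half_pos.le ht.1)
        (by positivity)
  · have _gamma_pos := Real.Gamma_pos_of_pos (s := c + 1) (by linarith)
    rw [mul_assoc (Real.Gamma (c + 1) * _)]
    calc Real.exp (c * t) * besselK 0 (2 * x * Real.sinh t)
      _ ≤ Real.exp (c * t) *
          (Real.Gamma (c + 1) * x ^ (-(c + 1)) * Real.sinh t ^ (-(c + 1))) := by
        gcongr
        exact besselK_zero_two_mul_mul_sinh_le (by linarith) hx (zero_lt_one.trans ht)
      _ = Real.Gamma (c + 1) * x ^ (-(c + 1)) *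
          (Real.exp (c * t) * Real.sinh t ^ (-(c + 1))) := by ring
      _ ≤ _ := mul_le_mul_of_nonneg_left
        (exp_mul_sinh_rpow_neg_le (by linarith) (by linarith) (le_of_lt ht)) (by positivity)

lemma macdonaldIntegral_zero_eq_besselK {a b : ℂ} (ha : 0 < a.re) (hb : 0 < b.re) {y : ℝ}
    (hy : 0 < y) (hab : a * b = (y ^ 2 : ℝ)) :
    macdonaldIntegral 0 a b = 2 * besselK 0 (2 * y) := by
  have re_pos : 0 < (a * b).re := by
    rw [hab, Complex.ofReal_re]
    positivity
  have swap := macdonaldIntegral_neg 0 1 (y ^ 2 : ℝ)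
  rw [neg_zero] at swap
  rw [macdonaldIntegral_eq_exp_mul 0 ha hb re_pos, zero_mul, Complex.exp_zero, one_mul, hab, ← swap,
    ofReal_besselK_zero (by positivity)]
  ring_nf

/-- Both arguments of the inner integral become `e^{± t} (u cosh t ± i x sinh t)`, with positive
product, so that the inner integral is a `K₀` of positive argument. -/
lemma macdonaldIntegral_mul_conj (ν : ℂ) {u : ℝ} (hu : 0 < u) (x : ℝ) :
    macdonaldIntegral ν ((u + x * Complex.I) / 2) ((u + x * Complex.I) / 2) *
        macdonaldIntegral ν ((u - x * Complex.I) / 2) ((u - x * Complex.I) / 2) =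
      4 * ∫ t : ℝ, Complex.exp (2 * ν * t) *
        besselK 0 (2 * √((u * Real.cosh t) ^ 2 + (x * Real.sinh t) ^ 2)) := by
  have re_pos : 0 < ((u + x * Complex.I) / 2).re := by simpa using hu
  have re_pos' : 0 < ((u - x * Complex.I) / 2).re := by simpa using hu
  have substitution := Measure.integral_comp_mul_left (fun t : ℝ ↦ Complex.exp (ν * t) *
    macdonaldIntegral 0 ((u + x * Complex.I) / 2 + (u - x * Complex.I) / 2 * Real.exp (-t))
      ((u + x * Complex.I) / 2 + (u - x * Complex.I) / 2 * Real.exp t)) 2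
  have inner (t : ℝ) :
      macdonaldIntegral 0 ((u + x * Complex.I) / 2 + (u - x * Complex.I) / 2 * Real.exp (-(2 * t)))
        ((u + x * Complex.I) / 2 + (u - x * Complex.I) / 2 * Real.exp (2 * t)) =
      2 * besselK 0 (2 * √((u * Real.cosh t) ^ 2 + (x * Real.sinh t) ^ 2)) := by
    refine macdonaldIntegral_zero_eq_besselK ?_ ?_ (Real.sqrt_pos.2 ?_) ?_
    · rw [Complex.add_re, Complex.re_mul_ofReal]
      positivity
    · rw [Complex.add_re, Complex.re_mul_ofReal]
      positivity
    · have := mul_pos hu (Real.cosh_pos t)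
      positivity
    · have exp_ne := Complex.exp_ne_zero t
      rw [Real.sq_sqrt (by positivity)]
      push_cast
      rw [Complex.cosh, Complex.sinh, two_mul, neg_add, Complex.exp_add, Complex.exp_add,
        Complex.exp_neg]
      field_simp
      ring_nf
      rw [Complex.I_sq]
      ring
  rw [macdonaldIntegral_mul_macdonaldIntegral ν re_pos re_pos re_pos' re_pos']
  rw [abs_of_pos (by norm_num), Complex.real_smul, Complex.ofReal_inv, Complex.ofReal_ofNat,
    eq_inv_mul_iff_mul_eq₀ two_ne_zero] at substitution
  rw [← substitution, ← integral_const_mul, ← integral_const_mul]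
  refine integral_congr_ae (ae_of_all _ fun t ↦ ?_)
  simp only [inner]
  push_cast
  ring_nf

lemma log_ofReal_mul_of_eq_I_or_eq_neg_I {r : ℝ} (hr : 0 < r) {ε : ℂ}
    (hε : ε = Complex.I ∨ ε = -Complex.I) :
    Complex.log (r * ε) = Real.log r + ε * Real.pi / 2 := by
  rcases hε with rfl | rfl
  · rw [Complex.log_ofReal_mul hr Complex.I_ne_zero, Complex.log_I]
    ring
  · rw [Complex.log_ofReal_mul hr (neg_ne_zero.2 Complex.I_ne_zero), Complex.log_neg_I]
    ring

lemma tendsto_sin_mul_macdonaldIntegral (ν : ℂ) {x : ℝ} (hx : 0 < x) {ε : ℂ}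
    (hε : ε = Complex.I ∨ ε = -Complex.I) :
    Tendsto (fun u : ℝ ↦ Complex.sin (Real.pi * ν) / Real.pi *
        macdonaldIntegral ν ((u + x * ε) / 2) ((u + x * ε) / 2)) (𝓝[>] 0)
      (𝓝 (Complex.exp (-(ν * (ε * Real.pi / 2))) * besselJ (-ν) x -
        Complex.exp (ν * (ε * Real.pi / 2)) * besselJ ν x)) := by
  have ε_re : ε.re = 0 := by rcases hε with rfl | rfl <;> simp
  have ε_sq : ε ^ 2 = -1 := by rcases hε with rfl | rfl <;> simp
  have mem_slitPlane : (((0 : ℝ) + x * ε) / 2) ∈ Complex.slitPlane := by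
    rcases hε with rfl | rfl <;> simp [Complex.slitPlane, hx.ne']
  have log_eq : Complex.log (((0 : ℝ) + x * ε) / 2) = Real.log (x / 2) + ε * Real.pi / 2 := by
    rw [← log_ofReal_mul_of_eq_I_or_eq_neg_I (half_pos hx) hε]
    push_cast
    ring_nf
  have sq_eq : ((0 : ℝ) + x * ε) / 2 * (((0 : ℝ) + x * ε) / 2) = -((x : ℂ) ^ 2 / 4) := by
    rw [Complex.ofReal_zero]
    linear_combination (x ^ 2 / 4 : ℂ) * ε_sq
  have continuous_C (s : ℂ) : Continuous (besselClifford s) :=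
    continuous_iff_continuousAt.2 fun z ↦ (hasDerivAt_besselClifford s z).continuousAt
  let L (u : ℝ) : ℂ := (u + x * ε) / 2
  have continuous_L : Continuous L := by fun_prop
  have continuousAt_log : ContinuousAt (fun u ↦ Complex.log (L u)) 0 :=
    continuous_L.continuousAt.clog mem_slitPlane
  have limit : ContinuousAt (fun u ↦ Complex.exp (-(ν * Complex.log (L u))) *
      besselClifford (-ν) (L u * L u) - Complex.exp (ν * Complex.log (L u)) *
      besselClifford ν (L u * L u)) 0 := by
    refine .sub (.mul ?_ ?_) (.mul ?_ ?_)
    · exact (continuousAt_const.mul continuousAt_log).neg.cexp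
    · exact ((continuous_C _).comp (continuous_L.mul continuous_L)).continuousAt
    · exact (continuousAt_const.mul continuousAt_log).cexp
    · exact ((continuous_C _).comp (continuous_L.mul continuous_L)).continuousAt
  convert (limit.mono_left (nhdsWithin_le_nhds (s := Ioi 0))).congr' ?_ using 2
  · simp only [L, log_eq, sq_eq, besselJ_eq_exp_mul_besselClifford _ hx, mul_add, neg_add,
      Complex.exp_add, neg_mul]
    ring
  · filter_upwards [self_mem_nhdsWithin] with u hu
    have : 0 < (L u).re := by simpa [L, ε_re] using hu
    exact (sin_mul_macdonaldIntegral ν this this).symm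

lemma sqrt_mul_sinh_sq {x : ℝ} (hx : 0 ≤ x) (t : ℝ) :
    √((x * Real.sinh t) ^ 2) = x * Real.sinh |t| := by
  rw [Real.sqrt_sq_eq_abs, abs_mul, abs_of_nonneg hx, Real.abs_sinh]

lemma norm_exp_mul_besselK_zero_sqrt_le (ν : ℂ) {x t : ℝ} (hx : 0 < x) (ht : t ≠ 0) (u : ℝ) :
    ‖Complex.exp (2 * ν * t) *
        besselK 0 (2 * √((u * Real.cosh t) ^ 2 + (x * Real.sinh t) ^ 2))‖ ≤
      Real.exp (2 * |ν.re| * |t|) * besselK 0 (2 * x * Real.sinh |t|) := by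
  have _sinh_pos := Real.sinh_pos_iff.2 (abs_pos.2 ht)
  have arg_pos : 0 < 2 * x * Real.sinh |t| := by positivity
  have arg_le : 2 * x * Real.sinh |t| ≤
      2 * √((u * Real.cosh t) ^ 2 + (x * Real.sinh t) ^ 2) := by
    rw [mul_assoc, ← sqrt_mul_sinh_sq hx.le]
    gcongr
    exact le_add_of_nonneg_left (sq_nonneg _)
  have exponent_le : (2 * ν * t).re ≤ 2 * |ν.re| * |t| := by
    calc (2 * ν * t).re = 2 * (ν.re * t) := by simp [mul_assoc]
      _ ≤ 2 * |ν.re * t| := by gcongr; exact le_abs_self _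
      _ = 2 * |ν.re| * |t| := by rw [abs_mul, mul_assoc]
  rw [norm_mul, Complex.norm_exp, Complex.norm_real, Real.norm_of_nonneg (besselK_nonneg _ _)]
  exact mul_le_mul (Real.exp_le_exp.2 exponent_le)
    (antitoneOn_besselK 0 arg_pos (arg_pos.trans_le arg_le) arg_le) (besselK_nonneg _ _)
    (Real.exp_pos _).le

lemma tendsto_besselK_zero_sqrt {x t : ℝ} (hx : 0 < x) (ht : t ≠ 0) :
    Tendsto (fun u ↦ besselK 0 (2 * √((u * Real.cosh t) ^ 2 + (x * Real.sinh t) ^ 2))) (𝓝[>] 0)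
      (𝓝 (besselK 0 (2 * x * Real.sinh |t|))) := by
  have _sinh_pos := Real.sinh_pos_iff.2 (abs_pos.2 ht)
  have arg_limit : Tendsto (fun u ↦ 2 * √((u * Real.cosh t) ^ 2 + (x * Real.sinh t) ^ 2)) (𝓝[>] 0)
      (𝓝 (2 * x * Real.sinh |t|)) := by
    have : Continuous fun u ↦ 2 * √((u * Real.cosh t) ^ 2 + (x * Real.sinh t) ^ 2) := by fun_prop
    simpa only [zero_mul, zero_pow two_ne_zero, zero_add, sqrt_mul_sinh_sq hx.le, ← mul_assoc]
      using (this.tendsto 0).mono_left (nhdsWithin_le_nhds (s := Ioi 0))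
  exact (hasDerivAt_besselK_zero (by positivity)).continuousAt.tendsto.comp arg_limit

lemma tendsto_integral_exp_mul_besselK_zero (ν : ℂ) {x : ℝ} (hx : 0 < x) :
    Tendsto (fun u : ℝ ↦ ∫ t : ℝ, Complex.exp (2 * ν * t) *
        besselK 0 (2 * √((u * Real.cosh t) ^ 2 + (x * Real.sinh t) ^ 2))) (𝓝[>] 0)
      (𝓝 (∫ t : ℝ, Complex.exp (2 * ν * t) * besselK 0 (2 * x * Real.sinh |t|))) := by
  have ne_zero : ∀ᵐ t : ℝ, t ≠ 0 := Measure.ae_ne volume 0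
  refine tendsto_integral_filter_of_dominated_convergence
    (fun t ↦ Real.exp (2 * |ν.re| * |t|) * besselK 0 (2 * x * Real.sinh |t|)) ?_
    (Eventually.of_forall fun u ↦
      ne_zero.mono fun t ht ↦ norm_exp_mul_besselK_zero_sqrt_le ν hx ht u)
    (integrable_exp_mul_besselK_zero_sinh (by positivity) hx) (ne_zero.mono fun t ht ↦ ?_)
  · filter_upwards [self_mem_nhdsWithin] with u hu
    have : Continuous fun t ↦
        besselK 0 (2 * √((u * Real.cosh t) ^ 2 + (x * Real.sinh t) ^ 2)) := by
      refine continuousOn_besselK_zero.comp_continuous (by fun_prop) fun t ↦ ?_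
      have := mul_pos hu (Real.cosh_pos t)
      rw [mem_Ioi]
      positivity
    exact Continuous.aestronglyMeasurable (by fun_prop)
  · exact ((Complex.continuous_ofReal.tendsto _).comp
      (tendsto_besselK_zero_sqrt hx ht)).const_mul _

lemma besselJ_sq_add_besselJ_neg_sq (ν : ℂ) {x : ℝ} (hx : 0 < x) :
    besselJ ν x ^ 2 + besselJ (-ν) x ^ 2 -
        2 * Complex.cos (Real.pi * ν) * besselJ ν x * besselJ (-ν) x =
      4 * (Complex.sin (Real.pi * ν) / Real.pi) ^ 2 *
        ∫ t : ℝ, Complex.exp (2 * ν * t) * besselK 0 (2 * x * Real.sinh |t|) := by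
  have left := (tendsto_sin_mul_macdonaldIntegral ν hx (.inl rfl)).mul
    (tendsto_sin_mul_macdonaldIntegral ν hx (.inr rfl))
  have right := (tendsto_integral_exp_mul_besselK_zero ν hx).const_mul
    (4 * (Complex.sin (Real.pi * ν) / Real.pi) ^ 2)
  have limits_eq := tendsto_nhds_unique_of_eventuallyEq left right (by
    filter_upwards [self_mem_nhdsWithin] with u hu
    have := macdonaldIntegral_mul_conj ν hu x
    rw [mul_neg, ← sub_eq_add_neg]
    linear_combination (Complex.sin (Real.pi * ν) / Real.pi) ^ 2 * this)
  have cos_eq : Complex.exp (ν * (Complex.I * Real.pi / 2)) ^ 2 +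
      Complex.exp (-(ν * (Complex.I * Real.pi / 2))) ^ 2 = 2 * Complex.cos (Real.pi * ν) := by
    rw [Complex.cos, ← Complex.exp_nat_mul, ← Complex.exp_nat_mul]
    push_cast
    ring_nf
  have exp_mul_exp : Complex.exp (ν * (Complex.I * Real.pi / 2)) *
      Complex.exp (-(ν * (Complex.I * Real.pi / 2))) = 1 := by
    rw [← Complex.exp_add, add_neg_cancel, Complex.exp_zero]
  simp only [neg_mul, neg_div, mul_neg, neg_neg] at limits_eq
  rw [← limits_eq]
  linear_combination besselJ (-ν) x * besselJ ν x * cos_eq -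
    (besselJ (-ν) x ^ 2 + besselJ ν x ^ 2) * exp_mul_exp

/-- The squared modulus `M_ν² = J_ν² + Y_ν²` of the Bessel functions, whose integral representation
is Nicholson's formula. -/
noncomputable def besselModulusSq (ν : ℂ) (x : ℝ) : ℂ :=
  besselJ ν x ^ 2 + besselY ν x ^ 2

lemma besselModulusSq_eq_integral {ν : ℂ} (hν : Complex.sin (Real.pi * ν) ≠ 0) {x : ℝ}
    (hx : 0 < x) :
    besselModulusSq ν x = 4 / Real.pi ^ 2 *
      ∫ t : ℝ, Complex.exp (2 * ν * t) * besselK 0 (2 * x * Real.sinh |t|) := by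
  have pi_ne : (Real.pi : ℂ) ≠ 0 := Complex.ofReal_ne_zero.2 Real.pi_ne_zero
  have sin_sq := Complex.sin_sq_add_cos_sq (Real.pi * ν)
  have bilinear := besselJ_sq_add_besselJ_neg_sq ν hx
  rw [besselModulusSq, besselY]
  generalize Complex.sin (Real.pi * ν) = S at *
  generalize Complex.cos (Real.pi * ν) = c at *
  field_simp at bilinear ⊢
  linear_combination bilinear + Real.pi ^ 2 * besselJ ν x ^ 2 * sin_sq

end Nicholson

section HankelTransform

open Set

lemma mul_besselK_le {s p x : ℝ} (hp : 0 < p) (hs : |s| ≤ p) (hx : 0 < x) :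
    x * besselK s x ≤ 2 * Real.Gamma p * (x / 2) ^ (1 - p) := by
  calc x * besselK s x ≤ x * (Real.Gamma p / (x / 2) ^ p) := by
        gcongr
        exact besselK_le hp hs hx
    _ = 2 * Real.Gamma p * (x / 2) ^ (1 - p) := by
        rw [Real.rpow_sub (by positivity), Real.rpow_one]
        ring

lemma tendsto_mul_besselK_atTop (s : ℝ) : Tendsto (fun x ↦ x * besselK s x) atTop (𝓝 0) := by
  have majorant : Tendsto (fun x : ℝ ↦ 2 * Real.Gamma (|s| + 2) * (x / 2) ^ (-(|s| + 1))) atTop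
      (𝓝 (2 * Real.Gamma (|s| + 2) * 0)) :=
    ((tendsto_rpow_neg_atTop (by positivity)).comp
      (tendsto_id.atTop_div_const two_pos)).const_mul _
  rw [mul_zero] at majorant
  refine squeeze_zero' ?_ ?_ majorant
  · filter_upwards [eventually_gt_atTop 0] with x hx
    exact mul_nonneg hx.le (besselK_nonneg _ _)
  · filter_upwards [eventually_gt_atTop 0] with x hx
    convert mul_besselK_le (p := |s| + 2) (by positivity) (by linarith) hx using 3
    ring

lemma tendsto_mul_besselK_zero_nhdsGT_zero :
    Tendsto (fun x ↦ x * besselK 0 x) (𝓝[>] 0) (𝓝 0) := by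
  have majorant : Tendsto (fun x : ℝ ↦ 2 * Real.Gamma (1 / 2) * (x / 2) ^ (1 - 1 / 2 : ℝ)) (𝓝[>] 0)
      (𝓝 (2 * Real.Gamma (1 / 2) * ((0 : ℝ) / 2) ^ (1 - 1 / 2 : ℝ))) := by
    refine (Continuous.tendsto ?_ 0).mono_left nhdsWithin_le_nhds
    exact continuous_const.mul
      ((Real.continuous_rpow_const (by norm_num)).comp (continuous_id.div_const 2))
  rw [zero_div, Real.zero_rpow (by norm_num), mul_zero] at majorant
  refine squeeze_zero' ?_ ?_ majorant
  · filter_upwards [self_mem_nhdsWithin] with x hx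
    exact mul_nonneg (le_of_lt hx) (besselK_nonneg _ _)
  · filter_upwards [self_mem_nhdsWithin] with x hx
    exact mul_besselK_le (by norm_num) (by norm_num) hx

variable (a : ℝ) {b : ℝ} (hb : 0 < b)
include hb

lemma integrableOn_mul_besselJ0_mul_besselK_zero :
    IntegrableOn (fun x ↦ x * besselJ0 (a * x) * besselK 0 (b * x)) (Ioi 0) := by
  have norm_le {p x : ℝ} (hp : 0 < p) (hx : 0 < x) :
      ‖x * besselJ0 (a * x) * besselK 0 (b * x)‖ ≤
        b⁻¹ * (2 * Real.Gamma p * (b / 2) ^ (1 - p)) * x ^ (1 - p) := by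
    have le_one : |besselJ0 (a * x)| ≤ 1 := abs_besselJ0_le_one _
    rw [norm_mul, norm_mul, Real.norm_of_nonneg hx.le, Real.norm_of_nonneg (besselK_nonneg _ _),
      Real.norm_eq_abs]
    calc x * |besselJ0 (a * x)| * besselK 0 (b * x) ≤ x * 1 * besselK 0 (b * x) := by
          gcongr
          exact besselK_nonneg _ _
      _ = b⁻¹ * (b * x * besselK 0 (b * x)) := by field_simp
      _ ≤ b⁻¹ * (2 * Real.Gamma p * (b * x / 2) ^ (1 - p)) := by
          refine mul_le_mul_of_nonneg_left ?_ (inv_nonneg.2 hb.le)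
          exact mul_besselK_le hp (abs_zero.trans_le hp.le) (by positivity)
      _ = b⁻¹ * (2 * Real.Gamma p * (b / 2) ^ (1 - p)) * x ^ (1 - p) := by
          rw [mul_div_right_comm, Real.mul_rpow (by positivity) hx.le]
          ring
  refine integrableOn_Ioi_of_norm_le_rpow ?_ (by norm_num) (by norm_num)
    (fun x hx ↦ norm_le (p := 1) one_pos hx.1)
    (fun x hx ↦ norm_le (p := 3) three_pos (one_pos.trans hx))
  refine ContinuousOn.aestronglyMeasurable (.mul ?_ ?_) measurableSet_Ioi
  · have := continuous_besselJ0
    fun_prop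
  · exact continuousOn_besselK_zero.comp (by fun_prop) fun x hx ↦ mul_pos hb hx

lemma hasDerivAt_besselJ1_mul_besselK_sub {x : ℝ} (hx : 0 < x) :
    HasDerivAt (fun x ↦ a * x * besselJ1 (a * x) * besselK 0 (b * x) -
        besselJ0 (a * x) * (b * x * besselK 1 (b * x)))
      ((a ^ 2 + b ^ 2) * (x * besselJ0 (a * x) * besselK 0 (b * x))) x := by
  have deriv_a : HasDerivAt (fun x ↦ a * x) a x := by simpa using (hasDerivAt_id x).const_mul a
  have deriv_b : HasDerivAt (fun x ↦ b * x) b x := by simpa using (hasDerivAt_id x).const_mul b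
  have hbx : 0 < b * x := mul_pos hb hx
  have := (((hasDerivAt_mul_besselJ1 (a * x)).comp x deriv_a).mul
    ((hasDerivAt_besselK_zero hbx).comp x deriv_b)).sub
    (((hasDerivAt_besselJ0 (a * x)).comp x deriv_a).mul
      ((hasDerivAt_mul_besselK_one hbx).comp x deriv_b))
  refine this.congr_deriv ?_
  simp only [Function.comp_apply]
  ring

lemma tendsto_besselJ1_mul_besselK_sub_nhdsGT_zero :
    Tendsto (fun x ↦ a * x * besselJ1 (a * x) * besselK 0 (b * x) -
      besselJ0 (a * x) * (b * x * besselK 1 (b * x))) (𝓝[>] 0) (𝓝 (-1)) := by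
  have scale : Tendsto (fun x ↦ b * x) (𝓝[>] 0) (𝓝[>] 0) := by
    refine tendsto_nhdsWithin_iff.2 ⟨?_, ?_⟩
    · simpa using ((continuous_const_mul b).tendsto 0).mono_left nhdsWithin_le_nhds
    · filter_upwards [self_mem_nhdsWithin] with x hx using mul_pos hb hx
  have J0_limit : Tendsto (fun x ↦ besselJ0 (a * x)) (𝓝[>] 0) (𝓝 1) := by
    have : Continuous fun x ↦ besselJ0 (a * x) := continuous_besselJ0.comp (by fun_prop)
    simpa [besselJ0_zero] using (this.tendsto 0).mono_left (nhdsWithin_le_nhds (s := Ioi 0))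
  have J1_limit : Tendsto (fun x ↦ a / b * besselJ1 (a * x)) (𝓝[>] 0) (𝓝 0) := by
    have : Continuous fun x ↦ a / b * besselJ1 (a * x) :=
      continuous_const.mul (continuous_besselJ1.comp (by fun_prop))
    simpa [besselJ1_zero] using (this.tendsto 0).mono_left (nhdsWithin_le_nhds (s := Ioi 0))
  convert (J1_limit.mul (tendsto_mul_besselK_zero_nhdsGT_zero.comp scale)).sub
    (J0_limit.mul (tendsto_mul_besselK_one.comp scale)) using 2
  · simp only [Function.comp_apply]
    field_simp
  · norm_num

lemma tendsto_besselJ1_mul_besselK_sub_atTop :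
    Tendsto (fun x ↦ a * x * besselJ1 (a * x) * besselK 0 (b * x) -
      besselJ0 (a * x) * (b * x * besselK 1 (b * x))) atTop (𝓝 0) := by
  have scale : Tendsto (fun x ↦ b * x) atTop atTop := tendsto_id.const_mul_atTop hb
  have J1_term := ((tendsto_mul_besselK_atTop 0).comp scale).zero_mul_isBoundedUnder_le
    (g := fun x ↦ a / b * besselJ1 (a * x)) (isBoundedUnder_of ⟨|a / b|, fun x ↦ by
      rw [Function.comp_apply, Real.norm_eq_abs, abs_mul]
      exact mul_le_of_le_one_right (abs_nonneg _) (abs_besselJ1_le_one _)⟩)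
  have J0_term := ((tendsto_mul_besselK_atTop 1).comp scale).zero_mul_isBoundedUnder_le
    (g := fun x ↦ besselJ0 (a * x)) (isBoundedUnder_of ⟨1, fun x ↦ abs_besselJ0_le_one _⟩)
  convert J1_term.sub J0_term using 2
  · simp only [Function.comp_apply]
    field_simp
  · norm_num

lemma integral_mul_besselJ0_mul_besselK_zero :
    ∫ x in Ioi (0 : ℝ), x * besselJ0 (a * x) * besselK 0 (b * x) = (a ^ 2 + b ^ 2)⁻¹ := by
  have := integral_Ioi_deriv_mul_eq_sub (a := 0) (v := 1) (v' := 0)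
    (fun x hx ↦ hasDerivAt_besselJ1_mul_besselK_sub a hb hx)
    (fun x _ ↦ hasDerivAt_const x (1 : ℝ))
    (by simpa [IntegrableOn] using
      (integrableOn_mul_besselJ0_mul_besselK_zero a hb).const_mul (a ^ 2 + b ^ 2))
    (by simpa using tendsto_besselJ1_mul_besselK_sub_nhdsGT_zero a hb)
    (by simpa using tendsto_besselJ1_mul_besselK_sub_atTop a hb)
  simp only [Pi.one_apply, mul_one, Pi.zero_apply, mul_zero, add_zero, integral_const_mul,
    zero_sub, neg_neg] at this
  exact eq_inv_of_mul_eq_one_right this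

end HankelTransform

section LogisticFourierTransform

open Set

lemma sigmoid_cpow_mul_one_sub_sigmoid_cpow (w : ℂ) (y : ℝ) :
    (Real.sigmoid y : ℂ) ^ w * (1 - Real.sigmoid y : ℂ) ^ (-w) = Complex.exp (w * y) := by
  have sigmoid_pos := Real.sigmoid_pos y
  have log_eq : Real.log (1 - Real.sigmoid y) = Real.log (Real.sigmoid y) - y := by
    rw [← Real.sigmoid_neg, ← Real.sigmoid_mul_rexp_neg, Real.log_mul sigmoid_pos.ne'
      (Real.exp_pos _).ne', Real.log_exp, sub_eq_add_neg]
  have one_sub_pos : 0 < 1 - Real.sigmoid y := sub_pos.2 (Real.sigmoid_lt_one y)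
  rw [← Complex.ofReal_one, ← Complex.ofReal_sub,
    Complex.cpow_def_of_ne_zero (Complex.ofReal_ne_zero.2 sigmoid_pos.ne'),
    Complex.cpow_def_of_ne_zero (Complex.ofReal_ne_zero.2 one_sub_pos.ne'), ← Complex.exp_add,
    ← Complex.ofReal_log sigmoid_pos.le, ← Complex.ofReal_log one_sub_pos.le, log_eq]
  push_cast
  ring_nf

lemma sigmoid_deriv_smul_cpow (w : ℂ) (y : ℝ) :
    (Real.sigmoid y * (1 - Real.sigmoid y)) • ((Real.sigmoid y : ℂ) ^ (1 + w - 1) *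
        (1 - Real.sigmoid y : ℂ) ^ (1 - w - 1)) =
      Complex.exp (w * y) * (Real.sigmoid y * (1 - Real.sigmoid y) : ℝ) := by
  rw [add_sub_cancel_left, sub_sub_cancel_left, sigmoid_cpow_mul_one_sub_sigmoid_cpow,
    Complex.real_smul, mul_comm]

lemma integrable_exp_mul_sigmoid_deriv {w : ℂ} (hw : |w.re| < 1) :
    Integrable fun y : ℝ ↦ Complex.exp (w * y) * (Real.sigmoid y * (1 - Real.sigmoid y) : ℝ) := by
  have convergent := Complex.betaIntegral_convergent (u := 1 + w) (v := 1 - w)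
    (by simpa [add_comm] using neg_lt_iff_pos_add.1 (abs_lt.1 hw).1)
    (by simpa using (abs_lt.1 hw).2)
  rw [intervalIntegrable_iff_integrableOn_Ioo_of_le zero_le_one, ← Real.range_sigmoid,
    ← image_univ, integrableOn_image_iff_integrableOn_deriv_smul_of_monotoneOn .univ
      (fun y _ ↦ (Real.hasDerivAt_sigmoid y).hasDerivWithinAt) (Real.sigmoid_monotone.monotoneOn _),
    integrableOn_univ] at convergent
  simpa only [sigmoid_deriv_smul_cpow] using convergent

lemma betaIntegral_one_add_one_sub (w : ℂ) :
    Complex.betaIntegral (1 + w) (1 - w) =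
      ∫ y : ℝ, Complex.exp (w * y) * (Real.sigmoid y * (1 - Real.sigmoid y) : ℝ) := by
  rw [Complex.betaIntegral, intervalIntegral.integral_of_le zero_le_one,
    integral_Ioc_eq_integral_Ioo, ← Real.range_sigmoid, ← image_univ,
    integral_image_eq_integral_deriv_smul_of_monotoneOn .univ
      (fun y _ ↦ (Real.hasDerivAt_sigmoid y).hasDerivWithinAt) (Real.sigmoid_monotone.monotoneOn _),
    setIntegral_univ]
  simp only [sigmoid_deriv_smul_cpow]

lemma integral_exp_mul_sigmoid_deriv {w : ℂ} (hw : |w.re| < 1) (hw' : w ≠ 0) :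
    ∫ y : ℝ, Complex.exp (w * y) * (Real.sigmoid y * (1 - Real.sigmoid y) : ℝ) =
      Real.pi * w / Complex.sin (Real.pi * w) := by
  have beta := Complex.Gamma_mul_Gamma_eq_betaIntegral (s := 1 + w) (t := 1 - w)
    (by simpa [add_comm] using neg_lt_iff_pos_add.1 (abs_lt.1 hw).1)
    (by simpa using (abs_lt.1 hw).2)
  rw [add_add_sub_cancel, one_add_one_eq_two, Complex.Gamma_ofNat_eq_factorial, Nat.factorial_one,
    Nat.cast_one, one_mul, add_comm, Complex.Gamma_add_one _ hw', mul_assoc,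
    Complex.Gamma_mul_Gamma_one_sub, add_comm, betaIntegral_one_add_one_sub] at beta
  rw [← beta]
  ring

lemma sigmoid_mul_one_sub_sigmoid (y : ℝ) :
    Real.sigmoid y * (1 - Real.sigmoid y) = (2 * (1 + Real.cosh y))⁻¹ := by
  rw [← Real.sigmoid_neg, Real.sigmoid_def, Real.sigmoid_def, neg_neg, ← mul_inv, Real.cosh_eq]
  congr 1
  linear_combination (Real.exp_add y (-y)).symm.trans (by rw [add_neg_cancel, Real.exp_zero])

lemma sigmoid_add_sub_sigmoid_sub (v y : ℝ) :
    Real.sigmoid (y + v) - Real.sigmoid (y - v) =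
      Real.sinh v / (Real.cosh v + Real.cosh y) := by
  have _cosh_v := Real.cosh_pos v
  have _cosh_y := Real.cosh_pos y
  rw [Real.sigmoid_def, Real.sigmoid_def, inv_sub_inv (by positivity) (by positivity),
    div_eq_div_iff (by positivity) (by positivity), Real.sinh_eq, Real.cosh_eq, Real.cosh_eq,
    neg_add, neg_sub, sub_eq_add_neg v, Real.exp_add, Real.exp_add, Real.exp_neg, Real.exp_neg]
  field_simp
  ring

lemma abs_sigmoid_add_sub_sigmoid_sub_le (v y : ℝ) :
    |Real.sigmoid (y + v) - Real.sigmoid (y - v)| ≤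
      2 * |Real.sinh v| * (Real.sigmoid y * (1 - Real.sigmoid y)) := by
  have _cosh_y := Real.cosh_pos y
  have one_le := Real.one_le_cosh v
  rw [sigmoid_add_sub_sigmoid_sub, sigmoid_mul_one_sub_sigmoid, abs_div,
    abs_of_pos (a := Real.cosh v + Real.cosh y) (by positivity)]
  calc |Real.sinh v| / (Real.cosh v + Real.cosh y) ≤ |Real.sinh v| / (1 + Real.cosh y) := by gcongr
    _ = 2 * |Real.sinh v| * (2 * (1 + Real.cosh y))⁻¹ := by field_simp

lemma integrable_exp_mul_sigmoid_sub {w : ℂ} (hw : |w.re| < 1) (v : ℝ) :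
    Integrable fun y : ℝ ↦
      Complex.exp (w * y) * (Real.sigmoid (y + v) - Real.sigmoid (y - v) : ℝ) := by
  have := continuous_sigmoid
  refine ((integrable_exp_mul_sigmoid_deriv hw).norm.const_mul (2 * |Real.sinh v|)).mono'
    (Continuous.aestronglyMeasurable (by fun_prop)) (ae_of_all _ fun y ↦ ?_)
  rw [norm_mul, norm_mul, Complex.norm_real, Complex.norm_real, mul_left_comm]
  gcongr
  exact (abs_sigmoid_add_sub_sigmoid_sub_le v y).trans
    (mul_le_mul_of_nonneg_left (le_abs_self _) (by positivity))

lemma integral_exp_mul_comp_add_right (w : ℂ) (g : ℝ → ℂ) (v : ℝ) :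
    ∫ y : ℝ, Complex.exp (w * y) * g (y + v) =
      Complex.exp (-(w * v)) * ∫ y : ℝ, Complex.exp (w * y) * g y := by
  rw [← integral_const_mul,
    ← integral_add_right_eq_self (fun y : ℝ ↦ Complex.exp (-(w * v)) * _) v]
  refine integral_congr_ae (ae_of_all _ fun y ↦ ?_)
  simp only [← mul_assoc, ← Complex.exp_add]
  push_cast
  ring_nf

lemma integral_exp_mul_deriv {w : ℂ} {g g' : ℝ → ℂ} (hg : ∀ y, HasDerivAt g (g' y) y)
    (int : Integrable fun y : ℝ ↦ Complex.exp (w * y) * g y)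
    (int' : Integrable fun y : ℝ ↦ Complex.exp (w * y) * g' y) :
    ∫ y : ℝ, Complex.exp (w * y) * g' y = -(w * ∫ y : ℝ, Complex.exp (w * y) * g y) := by
  have deriv_exp (y : ℝ) :
      HasDerivAt (fun y : ℝ ↦ Complex.exp (w * y)) (Complex.exp (w * y) * w) y := by
    simpa using ((hasDerivAt_id y).ofReal_comp.const_mul w).cexp
  have int_mul : Integrable fun y : ℝ ↦ Complex.exp (w * y) * w * g y :=
    (int.const_mul w).congr (ae_of_all _ fun y ↦ by ring)
  rw [integral_mul_deriv_eq_deriv_mul_of_integrable (fun y _ ↦ deriv_exp y) (fun y _ ↦ hg y)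
    int' int_mul int, ← integral_const_mul]
  congr 2 with y
  ring

lemma integral_exp_mul_sigmoid_sub {w : ℂ} (hw : |w.re| < 1) (hw' : w ≠ 0) (v : ℝ) :
    ∫ y : ℝ, Complex.exp (w * y) * (Real.sigmoid (y + v) - Real.sigmoid (y - v) : ℝ) =
      2 * Real.pi * Complex.sinh (w * v) / Complex.sin (Real.pi * w) := by
  let g (y : ℝ) : ℂ := (Real.sigmoid y * (1 - Real.sigmoid y) : ℝ)
  have int_g : Integrable fun y : ℝ ↦ Complex.exp (w * y) * g y :=
    integrable_exp_mul_sigmoid_deriv hw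
  have int_shift (v : ℝ) : Integrable fun y : ℝ ↦ Complex.exp (w * y) * g (y + v) := by
    refine ((int_g.comp_add_right v).const_mul (Complex.exp (-(w * v)))).congr
      (ae_of_all _ fun y ↦ ?_)
    simp only [← mul_assoc, ← Complex.exp_add]
    push_cast
    ring_nf
  have deriv (y : ℝ) :
      HasDerivAt (fun y ↦ ((Real.sigmoid (y + v) - Real.sigmoid (y - v) : ℝ) : ℂ))
        (g (y + v) - g (y + -v)) y := by
    refine (((Real.hasDerivAt_sigmoid _).comp_add_const y v).sub
      ((Real.hasDerivAt_sigmoid _).comp_sub_const y v)).ofReal_comp.congr_deriv ?_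
    rw [Complex.ofReal_sub, ← sub_eq_add_neg]
  have parts := integral_exp_mul_deriv deriv (integrable_exp_mul_sigmoid_sub hw v)
    (((int_shift v).sub (int_shift (-v))).congr (ae_of_all _ fun y ↦ (mul_sub _ _ _).symm))
  simp only [mul_sub] at parts
  rw [integral_sub (int_shift v) (int_shift (-v)), integral_exp_mul_comp_add_right,
    integral_exp_mul_comp_add_right, integral_exp_mul_sigmoid_deriv hw hw'] at parts
  apply mul_left_cancel₀ hw'
  rw [eq_neg_iff_add_eq_zero] at parts
  rw [Complex.sinh]
  push_cast at parts ⊢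
  rw [mul_neg, neg_neg] at parts
  linear_combination parts

end LogisticFourierTransform

section NicholsonKernel

open Set

/-- The kernel `Φ_n` of the inversion formula, biorthogonal to the functions
`besselModulusSq (i m / 2)`. -/
noncomputable def nicholsonKernel (n : ℕ) (x : ℝ) : ℝ :=
  x * ∫ u in (0 : ℝ)..Real.pi, besselJ0 (2 * x * Real.cosh u) * Real.sinh (2 * u) * Real.sin (n * u)

lemma continuous_nicholsonKernel (n : ℕ) : Continuous (nicholsonKernel n) := by
  have := continuous_besselJ0
  refine continuous_id.mul
    (intervalIntegral.continuous_parametric_intervalIntegral_of_continuous' ?_ _ _)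
  simp only [Function.uncurry_def]
  fun_prop

lemma nicholsonKernel_eq_neg_integral_besselJ1 (n : ℕ) {x : ℝ} (hx : x ≠ 0) :
    nicholsonKernel n x = -∫ u in (0 : ℝ)..Real.pi,
      Real.cosh u * besselJ1 (2 * x * Real.cosh u) * (n * Real.cos (n * u)) := by
  have continuous_J0 := continuous_besselJ0
  have _continuous_J1 := continuous_besselJ1
  have deriv_J1 (u : ℝ) :
      HasDerivAt (fun u ↦ 2 * x * Real.cosh u * besselJ1 (2 * x * Real.cosh u))
        (2 * x * Real.cosh u * besselJ0 (2 * x * Real.cosh u) * (2 * x * Real.sinh u)) u :=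
    HasDerivAt.comp (h₂ := fun y ↦ y * besselJ1 y) u (hasDerivAt_mul_besselJ1 _)
      ((Real.hasDerivAt_cosh u).const_mul (2 * x))
  have deriv_sin (u : ℝ) :
      HasDerivAt (fun u : ℝ ↦ Real.sin (n * u)) (n * Real.cos (n * u)) u := by
    simpa [mul_comm] using ((hasDerivAt_id u).const_mul (n : ℝ)).sin
  have parts := intervalIntegral.integral_mul_deriv_eq_deriv_mul (a := 0) (b := Real.pi)
    (fun u _ ↦ deriv_J1 u) (fun u _ ↦ deriv_sin u) (Continuous.intervalIntegrable (by fun_prop) _ _)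
    (Continuous.intervalIntegrable (by fun_prop) _ _)
  simp only [Real.sin_nat_mul_pi, mul_zero, Real.sin_zero, sub_zero, zero_sub] at parts
  refine mul_left_cancel₀ (mul_ne_zero two_ne_zero hx) ?_
  calc 2 * x * nicholsonKernel n x
      = ∫ u in (0 : ℝ)..Real.pi, 2 * x * Real.cosh u * besselJ0 (2 * x * Real.cosh u) *
          (2 * x * Real.sinh u) * Real.sin (n * u) := by
        rw [nicholsonKernel, ← mul_assoc, ← intervalIntegral.integral_const_mul]
        congr with u
        rw [Real.sinh_two_mul]
        ring
    _ = -∫ u in (0 : ℝ)..Real.pi, 2 * x * Real.cosh u * besselJ1 (2 * x * Real.cosh u) *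
          (n * Real.cos (n * u)) := neg_eq_iff_eq_neg.1 parts.symm
    _ = _ := by
        simp only [mul_neg, ← intervalIntegral.integral_const_mul, mul_assoc]

lemma abs_nicholsonKernel_le_mul (n : ℕ) {x : ℝ} (hx : 0 < x) :
    |nicholsonKernel n x| ≤ Real.sinh (2 * Real.pi) * Real.pi * x := by
  have integrand_le : ∀ u ∈ uIoc 0 Real.pi,
      ‖besselJ0 (2 * x * Real.cosh u) * Real.sinh (2 * u) * Real.sin (n * u)‖ ≤
        Real.sinh (2 * Real.pi) := by
    intro u hu
    rw [uIoc_of_le Real.pi_pos.le] at hu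
    have sinh_le : |Real.sinh (2 * u)| ≤ Real.sinh (2 * Real.pi) := by
      rw [Real.abs_sinh, Real.sinh_le_sinh, abs_of_pos (by linarith [hu.1])]
      linarith [hu.2]
    rw [Real.norm_eq_abs, abs_mul, abs_mul]
    calc _ ≤ 1 * Real.sinh (2 * Real.pi) * 1 := by
          gcongr
          · exact abs_besselJ0_le_one _
          · exact Real.abs_sin_le_one _
      _ = Real.sinh (2 * Real.pi) := by ring
  rw [nicholsonKernel, abs_mul, abs_of_pos hx, mul_comm]
  gcongr
  simpa [abs_of_pos Real.pi_pos] using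
    intervalIntegral.norm_integral_le_of_norm_le_const integrand_le

lemma abs_nicholsonKernel_le_rpow (n : ℕ) {x : ℝ} (hx : 0 < x) :
    |nicholsonKernel n x| ≤ 2 * Real.cosh Real.pi * n * Real.pi * x ^ (-(1 / 2) : ℝ) := by
  have integrand_le : ∀ u ∈ uIoc 0 Real.pi,
      ‖Real.cosh u * besselJ1 (2 * x * Real.cosh u) * (n * Real.cos (n * u))‖ ≤
        Real.cosh Real.pi * (2 / √x) * (n * 1) := by
    intro u hu
    rw [uIoc_of_le Real.pi_pos.le] at hu
    have cosh_le : Real.cosh u ≤ Real.cosh Real.pi := by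
      rw [Real.cosh_le_cosh, abs_of_pos hu.1, abs_of_pos Real.pi_pos]
      exact hu.2
    have le_arg : x ≤ 2 * x * Real.cosh u := by nlinarith [Real.one_le_cosh u]
    have J1_le : |besselJ1 (2 * x * Real.cosh u)| ≤ 2 / √x :=
      (abs_besselJ1_le_two_div_sqrt (hx.trans_le le_arg)).trans (by gcongr)
    rw [Real.norm_eq_abs, abs_mul, abs_mul, abs_mul, Nat.abs_cast, abs_of_pos (Real.cosh_pos u)]
    gcongr
    · exact Real.abs_cos_le_one _
  rw [nicholsonKernel_eq_neg_integral_besselJ1 n hx.ne', abs_neg]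
  refine (intervalIntegral.norm_integral_le_of_norm_le_const integrand_le).trans_eq ?_
  rw [sub_zero, abs_of_pos Real.pi_pos, Real.rpow_neg hx.le, ← Real.sqrt_eq_rpow]
  ring

lemma integrableOn_nicholsonKernel_mul_rpow (n : ℕ) {p : ℝ} (hp : 1 / 2 < p) (hp' : p < 2) :
    IntegrableOn (fun x ↦ nicholsonKernel n x * x ^ (-p)) (Ioi 0) := by
  have meas : AEStronglyMeasurable (fun x ↦ nicholsonKernel n x * x ^ (-p))
      (volume.restrict (Ioi 0)) :=
    ((continuous_nicholsonKernel n).measurable.mul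
      (measurable_id.pow_const _)).aestronglyMeasurable
  have norm_eq {x : ℝ} (hx : 0 < x) :
      ‖nicholsonKernel n x * x ^ (-p)‖ = |nicholsonKernel n x| * x ^ (-p) := by
    rw [norm_mul, Real.norm_eq_abs, Real.norm_of_nonneg (by positivity)]
  refine integrableOn_Ioi_of_norm_le_rpow (a := 1 - p) (b := -(1 / 2) - p)
    (A := Real.sinh (2 * Real.pi) * Real.pi) (B := 2 * Real.cosh Real.pi * n * Real.pi)
    meas (by linarith) (by linarith) ?_ ?_
  · intro x hx
    rw [norm_eq hx.1, sub_eq_add_neg, Real.rpow_add hx.1, Real.rpow_one, ← mul_assoc]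
    gcongr
    · exact (Real.rpow_pos_of_pos hx.1 _).le
    · exact abs_nicholsonKernel_le_mul n hx.1
  · intro x hx
    have x_pos : 0 < x := one_pos.trans hx
    rw [norm_eq x_pos, sub_eq_add_neg, Real.rpow_add x_pos, ← mul_assoc]
    gcongr
    exact abs_nicholsonKernel_le_rpow n x_pos

end NicholsonKernel

section Biorthogonality

open Set
open Real (sigmoid)

lemma integrable_mul_besselJ0_mul_besselK_zero_prod (n : ℕ) {b : ℝ} (hb : 0 < b) :
    Integrable (fun p : ℝ × ℝ ↦ p.1 * (besselJ0 (2 * p.1 * Real.cosh p.2) * Real.sinh (2 * p.2) *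
      Real.sin (n * p.2)) * besselK 0 (b * p.1))
      ((volume.restrict (Ioi 0)).prod (volume.restrict (Ioc 0 Real.pi))) := by
  have continuous_J0 := continuous_besselJ0
  have integrable_fst : IntegrableOn (fun x ↦ x * besselK 0 (b * x)) (Ioi 0) := by
    simpa [besselJ0_zero] using integrableOn_mul_besselJ0_mul_besselK_zero 0 hb
  have integrable_snd : IntegrableOn (fun u ↦ Real.sinh (2 * u)) (Ioc 0 Real.pi) :=
    (by fun_prop : Continuous fun u ↦ Real.sinh (2 * u)).integrableOn_Ioc
  refine (integrable_fst.mul_prod integrable_snd).mono ?_ (ae_of_all _ fun p ↦ ?_)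
  · rw [Measure.prod_restrict]
    refine ContinuousOn.aestronglyMeasurable ?_ (measurableSet_Ioi.prod measurableSet_Ioc)
    exact (by fun_prop : Continuous fun p : ℝ × ℝ ↦ p.1 * (besselJ0 (2 * p.1 * Real.cosh p.2) *
      Real.sinh (2 * p.2) * Real.sin (n * p.2))).continuousOn.mul
      (continuousOn_besselK_zero.comp (by fun_prop) fun p hp ↦ mul_pos hb hp.1)
  · simp only [norm_mul, Real.norm_eq_abs]
    calc _ ≤ |p.1| * (1 * |Real.sinh (2 * p.2)| * 1) * |besselK 0 (b * p.1)| := by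
          gcongr
          · exact abs_besselJ0_le_one _
          · exact Real.abs_sin_le_one _
      _ = |p.1| * |besselK 0 (b * p.1)| * |Real.sinh (2 * p.2)| := by ring

lemma integral_nicholsonKernel_mul_besselK_zero (n : ℕ) {b : ℝ} (hb : 0 < b) :
    ∫ x in Ioi 0, nicholsonKernel n x * besselK 0 (b * x) = ∫ u in (0 : ℝ)..Real.pi,
      Real.sin (n * u) * (Real.sinh (2 * u) / ((2 * Real.cosh u) ^ 2 + b ^ 2)) := by
  simp only [nicholsonKernel, intervalIntegral.integral_of_le Real.pi_pos.le,
    ← integral_const_mul, ← integral_mul_const]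
  rw [integral_integral_swap (integrable_mul_besselJ0_mul_besselK_zero_prod n hb)]
  congr with u
  rw [div_eq_mul_inv, ← integral_mul_besselJ0_mul_besselK_zero (2 * Real.cosh u) hb, ← mul_assoc,
    ← integral_const_mul]
  congr with x
  rw [mul_right_comm 2 x]
  ring

lemma integral_nicholsonKernel_mul_besselK_zero_sinh (n : ℕ) {t : ℝ} (ht : t ≠ 0) :
    ∫ x in Ioi 0, nicholsonKernel n x * besselK 0 (2 * x * Real.sinh |t|) =
      ∫ u in (0 : ℝ)..Real.pi,
        Real.sin (n * u) * ((sigmoid (2 * t + 2 * u) - sigmoid (2 * t - 2 * u)) / 2) := by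
  have _sinh_pos : 0 < Real.sinh |t| := Real.sinh_pos_iff.2 (abs_pos.2 ht)
  simp only [mul_right_comm 2 _ (Real.sinh |t|)]
  rw [integral_nicholsonKernel_mul_besselK_zero n (by positivity)]
  congr with u
  have denominator_eq : (2 * Real.cosh u) ^ 2 + (2 * Real.sinh |t|) ^ 2 =
      2 * (Real.cosh (2 * u) + Real.cosh (2 * t)) := by
    rw [← Real.cosh_abs (2 * t), abs_mul, abs_two, Real.cosh_two_mul, Real.cosh_two_mul,
      Real.sinh_sq u, Real.cosh_sq |t|]
    ring
  rw [denominator_eq, sigmoid_add_sub_sigmoid_sub, div_div, mul_comm (_ + _)]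

lemma norm_exp_I_mul_mul (ω t : ℝ) : ‖Complex.exp (Complex.I * ω * t)‖ = 1 := by
  rw [mul_assoc, mul_comm, ← Complex.ofReal_mul, Complex.norm_exp_ofReal_mul_I]

lemma norm_exp_mul_besselK_zero_sinh_le (ω : ℝ) {p x t : ℝ} (hp : 0 < p) (hx : 0 < x)
    (ht : t ≠ 0) :
    ‖Complex.exp (Complex.I * ω * t) * besselK 0 (2 * x * Real.sinh |t|)‖ ≤
      Real.Gamma p * x ^ (-p) * Real.sinh |t| ^ (-p) := by
  rw [norm_mul, norm_exp_I_mul_mul, one_mul, Complex.norm_real,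
    Real.norm_of_nonneg (besselK_nonneg _ _)]
  exact besselK_zero_two_mul_mul_sinh_le hp hx (abs_pos.2 ht)

lemma integrable_nicholsonKernel_mul_exp_mul_besselK_zero_prod (n : ℕ) (ω : ℝ) :
    Integrable (fun p : ℝ × ℝ ↦ (nicholsonKernel n p.1 : ℂ) *
      (Complex.exp (Complex.I * ω * p.2) * besselK 0 (2 * p.1 * Real.sinh |p.2|)))
      ((volume.restrict (Ioi 0)).prod volume) := by
  have continuous_kernel := continuous_nicholsonKernel n
  have measurableSet_domain : MeasurableSet (Ioi (0 : ℝ) ×ˢ ({0}ᶜ : Set ℝ)) :=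
    measurableSet_Ioi.prod (measurableSet_singleton 0).compl
  have bound_integrable : Integrable (fun p : ℝ × ℝ ↦ Real.Gamma (3 / 4) *
      (nicholsonKernel n p.1 * p.1 ^ (-(3 / 4) : ℝ) * Real.sinh |p.2| ^ (-(3 / 4) : ℝ)))
      ((volume.restrict (Ioi 0)).prod (volume.restrict {0}ᶜ)) :=
    ((integrableOn_nicholsonKernel_mul_rpow n (by norm_num) (by norm_num)).mul_prod
      (integrable_sinh_abs_rpow_neg (by norm_num) (by norm_num)).integrableOn).const_mul _
  nth_rw 2 [← restrict_compl_singleton (μ := volume) (0 : ℝ)]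
  refine bound_integrable.mono ?_ ?_
  · rw [Measure.prod_restrict]
    refine ContinuousOn.aestronglyMeasurable ?_ measurableSet_domain
    have continuousOn_K0 : ContinuousOn (fun p : ℝ × ℝ ↦ besselK 0 (2 * p.1 * Real.sinh |p.2|))
        (Ioi 0 ×ˢ {0}ᶜ) :=
      continuousOn_besselK_zero.comp (by fun_prop) fun p hp ↦
        mul_pos (mul_pos two_pos hp.1) (Real.sinh_pos_iff.2 (abs_pos.2 hp.2))
    fun_prop
  · rw [Measure.prod_restrict]
    refine (ae_restrict_iff' measurableSet_domain).2 (ae_of_all _ fun p hp ↦ ?_)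
    have x_pos : 0 < p.1 := hp.1
    have Gamma_pos : 0 < Real.Gamma (3 / 4) := Real.Gamma_pos_of_pos (by norm_num)
    have sinh_pos : 0 < Real.sinh |p.2| := Real.sinh_pos_iff.2 (abs_pos.2 hp.2)
    calc _ ≤ |nicholsonKernel n p.1| * (Real.Gamma (3 / 4) * p.1 ^ (-(3 / 4) : ℝ) *
          Real.sinh |p.2| ^ (-(3 / 4) : ℝ)) := by
          rw [norm_mul, Complex.norm_real, Real.norm_eq_abs]
          gcongr
          exact norm_exp_mul_besselK_zero_sinh_le ω (by norm_num) hp.1 hp.2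
      _ = _ := by
          simp only [norm_mul, Real.norm_eq_abs, abs_of_pos Gamma_pos,
            abs_of_pos (Real.rpow_pos_of_pos x_pos _), abs_of_pos (Real.rpow_pos_of_pos sinh_pos _)]
          ring

lemma integrable_exp_mul_sin_mul_sigmoid_sub_prod (n : ℕ) (ω : ℝ) :
    Integrable (fun p : ℝ × ℝ ↦ Complex.exp (Complex.I * ω * p.1) * (Real.sin (n * p.2) *
      ((sigmoid (2 * p.1 + 2 * p.2) - sigmoid (2 * p.1 - 2 * p.2)) / 2) : ℝ))
      (volume.prod (volume.restrict (Ioc 0 Real.pi))) := by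
  have integrable_deriv : Integrable fun y ↦ sigmoid y * (1 - sigmoid y) := by
    simpa using (integrable_exp_mul_sigmoid_deriv (w := 0) (by simp)).re
  have integrable_snd : IntegrableOn (fun u ↦ Real.sinh (2 * u)) (Ioc 0 Real.pi) :=
    (by fun_prop : Continuous fun u ↦ Real.sinh (2 * u)).integrableOn_Ioc
  refine ((integrable_deriv.comp_mul_left' two_ne_zero).mul_prod integrable_snd).mono
    (by fun_prop : Continuous _).aestronglyMeasurable (ae_of_all _ fun p ↦ ?_)
  have sub_le := abs_sigmoid_add_sub_sigmoid_sub_le (2 * p.2) (2 * p.1)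
  have deriv_le := le_abs_self (sigmoid (2 * p.1) * (1 - sigmoid (2 * p.1)))
  rw [norm_mul, norm_exp_I_mul_mul, one_mul, Complex.norm_real, norm_mul, norm_mul, norm_div]
  simp only [Real.norm_eq_abs, abs_two]
  calc _ ≤ 1 * (2 * |Real.sinh (2 * p.2)| * |sigmoid (2 * p.1) * (1 - sigmoid (2 * p.1))| / 2) := by
        gcongr
        · exact Real.abs_sin_le_one _
        · exact sub_le.trans (by gcongr)
    _ = _ := by ring

lemma integral_exp_mul_sigmoid_two_mul_sub {ω : ℝ} (hω : ω ≠ 0) (u : ℝ) :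
    ∫ t : ℝ, Complex.exp (Complex.I * ω * t) *
      (sigmoid (2 * t + 2 * u) - sigmoid (2 * t - 2 * u) : ℝ) =
      (Real.pi * Real.sin (ω * u) / Real.sinh (Real.pi * ω / 2) : ℝ) := by
  have transform := integral_exp_mul_sigmoid_sub (w := ω / 2 * Complex.I) (by simp)
    (by simpa using hω) (2 * u)
  have scaled := Measure.integral_comp_mul_left (fun y : ℝ ↦
    Complex.exp (ω / 2 * Complex.I * y) * (sigmoid (y + 2 * u) - sigmoid (y - 2 * u) : ℝ)) 2
  have sinh_ne_zero : Complex.sinh (Real.pi * ω / 2) ≠ 0 := by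
    exact_mod_cast Real.sinh_ne_zero.2 (by positivity)
  convert scaled using 1
  · congr with t
    push_cast
    ring_nf
  · rw [transform,
      show (ω / 2 * Complex.I * (2 * u : ℝ) : ℂ) = ω * u * Complex.I by push_cast; ring,
      show (Real.pi * (ω / 2 * Complex.I) : ℂ) = Real.pi * ω / 2 * Complex.I by ring,
      Complex.sinh_mul_I, Complex.sin_mul_I, Complex.real_smul, abs_of_pos (by norm_num)]
    push_cast
    field_simp

lemma integral_nicholsonKernel_mul_integral_exp_mul_besselK_zero (n : ℕ) {ω : ℝ} (hω : ω ≠ 0) :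
    ∫ x in Ioi 0, (nicholsonKernel n x : ℂ) *
      ∫ t : ℝ, Complex.exp (Complex.I * ω * t) * besselK 0 (2 * x * Real.sinh |t|) =
      (Real.pi / (2 * Real.sinh (Real.pi * ω / 2)) *
        ∫ u in (0 : ℝ)..Real.pi, Real.sin (n * u) * Real.sin (ω * u) : ℝ) := by
  have integral_x : ∀ᵐ t : ℝ, ∫ x in Ioi 0, (nicholsonKernel n x : ℂ) *
      (Complex.exp (Complex.I * ω * t) * besselK 0 (2 * x * Real.sinh |t|)) =
      ∫ u in Ioc 0 Real.pi, Complex.exp (Complex.I * ω * t) * (Real.sin (n * u) *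
        ((sigmoid (2 * t + 2 * u) - sigmoid (2 * t - 2 * u)) / 2) : ℝ) := by
    filter_upwards [Measure.ae_ne volume 0] with t ht
    simp only [mul_left_comm _ (Complex.exp _), ← Complex.ofReal_mul]
    rw [integral_const_mul, integral_const_mul, integral_complex_ofReal, integral_complex_ofReal,
      integral_nicholsonKernel_mul_besselK_zero_sinh n ht,
      intervalIntegral.integral_of_le Real.pi_pos.le]
  have integral_t (u : ℝ) : ∫ t : ℝ, Complex.exp (Complex.I * ω * t) * (Real.sin (n * u) *
        ((sigmoid (2 * t + 2 * u) - sigmoid (2 * t - 2 * u)) / 2) : ℝ) =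
      (Real.pi / (2 * Real.sinh (Real.pi * ω / 2)) *
        (Real.sin (n * u) * Real.sin (ω * u)) : ℝ) := by
    rw [show Real.pi / (2 * Real.sinh (Real.pi * ω / 2)) * (Real.sin (n * u) * Real.sin (ω * u)) =
      Real.sin (n * u) / 2 * (Real.pi * Real.sin (ω * u) / Real.sinh (Real.pi * ω / 2)) by ring,
      Complex.ofReal_mul, ← integral_exp_mul_sigmoid_two_mul_sub hω, ← integral_const_mul]
    congr with t
    push_cast
    ring
  simp only [← integral_const_mul]
  rw [integral_integral_swap (integrable_nicholsonKernel_mul_exp_mul_besselK_zero_prod n ω),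
    integral_congr_ae integral_x,
    integral_integral_swap (integrable_exp_mul_sin_mul_sigmoid_sub_prod n ω)]
  simp only [integral_t]
  rw [integral_complex_ofReal, integral_const_mul, intervalIntegral.integral_of_le Real.pi_pos.le]

lemma integral_sin_nat_mul_sin_nat (n : ℕ) {m : ℕ} (hm : m ≠ 0) :
    ∫ u in (0 : ℝ)..Real.pi, Real.sin (n * u) * Real.sin (m * u) =
      if n = m then Real.pi / 2 else 0 := by
  have integral_cos {k : ℤ} (hk : k ≠ 0) : ∫ u in (0 : ℝ)..Real.pi, Real.cos (k * u) = 0 := by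
    rw [intervalIntegral.integral_comp_mul_left Real.cos (by exact_mod_cast hk), integral_cos,
      Real.sin_int_mul_pi, mul_zero, Real.sin_zero, sub_zero, smul_zero]
  have product_to_sum (u : ℝ) : Real.sin (n * u) * Real.sin (m * u) =
      (Real.cos ((n - m : ℤ) * u) - Real.cos ((n + m : ℤ) * u)) / 2 := by
    push_cast
    rw [sub_mul, add_mul, Real.cos_sub, Real.cos_add]
    ring
  simp only [product_to_sum]
  rw [intervalIntegral.integral_div, intervalIntegral.integral_sub
    (Continuous.intervalIntegrable (by fun_prop) _ _)
    (Continuous.intervalIntegrable (by fun_prop) _ _), integral_cos (k := n + m) (by lia), sub_zero]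
  split_ifs with h
  · simp [h]
  · rw [integral_cos (by lia), zero_div]

end Biorthogonality

section TsumIntegral

variable {α ι E : Type*} [MeasurableSpace α] {μ : Measure α} [Countable ι] [NormedAddCommGroup E]
  [CompleteSpace E] {F : ι → α → E} {c : ι → ℝ} {g : α → ℝ}

lemma ae_hasSum_tsum_of_norm_le_mul (hc : Summable c) (hFg : ∀ i, ∀ᵐ x ∂μ, ‖F i x‖ ≤ c i * g x) :
    ∀ᵐ x ∂μ, HasSum (F · x) (∑' i, F i x) ∧ ‖∑' i, F i x‖ ≤ (∑' i, c i) * g x := by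
  filter_upwards [ae_all_iff.2 hFg] with x hx
  have bound_hasSum := hc.hasSum.mul_right (g x)
  exact ⟨(Summable.of_norm_bounded bound_hasSum.summable hx).hasSum,
    tsum_of_norm_bounded bound_hasSum hx⟩

lemma integrable_tsum_of_norm_le_mul (hF : ∀ i, AEStronglyMeasurable (F i) μ) (hc : Summable c)
    (hg : Integrable g μ) (hFg : ∀ i, ∀ᵐ x ∂μ, ‖F i x‖ ≤ c i * g x) :
    Integrable (fun x ↦ ∑' i, F i x) μ := by
  have hasSum_and_le := ae_hasSum_tsum_of_norm_le_mul hc hFg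
  refine (hg.const_mul (∑' i, c i)).mono' ?_ (hasSum_and_le.mono fun _ hx ↦ hx.2)
  exact aestronglyMeasurable_of_tendsto_ae atTop
    (fun s ↦ Finset.aestronglyMeasurable_fun_sum s fun i _ ↦ hF i)
    (hasSum_and_le.mono fun _ hx ↦ hx.1)

lemma hasSum_integral_of_norm_le_mul [NormedSpace ℝ E] (hF : ∀ i, AEStronglyMeasurable (F i) μ)
    (hc : Summable c) (hg : Integrable g μ) (hFg : ∀ i, ∀ᵐ x ∂μ, ‖F i x‖ ≤ c i * g x) :
    HasSum (fun i ↦ ∫ x, F i x ∂μ) (∫ x, ∑' i, F i x ∂μ) := by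
  refine hasSum_integral_of_dominated_convergence (fun i x ↦ c i * g x) hF hFg
    (ae_of_all _ fun x ↦ hc.mul_right (g x)) ?_
    ((ae_hasSum_tsum_of_norm_le_mul hc hFg).mono fun _ hx ↦ hx.1)
  simpa only [tsum_mul_right] using hg.const_mul (∑' i, c i)

end TsumIntegral

section InversionFormula

open Set

lemma besselModulusSq_I_mul_div_two {ω : ℝ} (hω : ω ≠ 0) {x : ℝ} (hx : 0 < x) :
    besselModulusSq (Complex.I * ω / 2) x = 4 / Real.pi ^ 2 *
      ∫ t : ℝ, Complex.exp (Complex.I * ω * t) * besselK 0 (2 * x * Real.sinh |t|) := by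
  have sin_eq : Complex.sin (Real.pi * (Complex.I * ω / 2)) =
      (Real.sinh (Real.pi * ω / 2) : ℂ) * Complex.I := by
    rw [Complex.ofReal_sinh, ← Complex.sin_mul_I]
    push_cast
    ring_nf
  have sinh_ne_zero : Real.sinh (Real.pi * ω / 2) ≠ 0 := Real.sinh_ne_zero.2 (by positivity)
  rw [besselModulusSq_eq_integral (by simp [sin_eq, sinh_ne_zero, -Complex.ofReal_sinh]) hx,
    mul_div_cancel₀ _ two_ne_zero]

lemma norm_besselModulusSq_I_mul_div_two_le {ω : ℝ} (hω : ω ≠ 0) {p x : ℝ} (hp : 0 < p)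
    (hp' : p < 1) (hx : 0 < x) :
    ‖besselModulusSq (Complex.I * ω / 2) x‖ ≤
      4 / Real.pi ^ 2 * Real.Gamma p * (∫ t : ℝ, Real.sinh |t| ^ (-p)) * x ^ (-p) := by
  have integral_le := norm_integral_le_of_norm_le
    ((integrable_sinh_abs_rpow_neg hp hp').const_mul (Real.Gamma p * x ^ (-p)))
    ((Measure.ae_ne volume 0).mono fun t ht ↦ norm_exp_mul_besselK_zero_sinh_le ω hp hx ht)
  rw [besselModulusSq_I_mul_div_two hω hx, norm_mul]
  calc _ = 4 / Real.pi ^ 2 * ‖∫ t : ℝ, Complex.exp (Complex.I * ω * t) *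
          besselK 0 (2 * x * Real.sinh |t|)‖ := by
        simp [abs_of_pos Real.pi_pos]
    _ ≤ 4 / Real.pi ^ 2 * (Real.Gamma p * x ^ (-p) * ∫ t : ℝ, Real.sinh |t| ^ (-p)) := by
        rw [← integral_const_mul]
        gcongr
    _ = _ := by ring

lemma integrableOn_nicholsonKernel_mul_besselModulusSq (n : ℕ) {ω : ℝ} (hω : ω ≠ 0) :
    IntegrableOn (fun x ↦ (nicholsonKernel n x : ℂ) * besselModulusSq (Complex.I * ω / 2) x)
      (Ioi 0) := by
  have integrable_inner :=
    (integrable_nicholsonKernel_mul_exp_mul_besselK_zero_prod n ω).integral_prod_left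
  refine (integrable_inner.const_mul (4 / Real.pi ^ 2 : ℂ)).congr
    (ae_restrict_of_forall_mem measurableSet_Ioi fun x hx ↦ ?_)
  simp only [integral_const_mul, besselModulusSq_I_mul_div_two hω hx]
  ring

lemma integral_nicholsonKernel_mul_besselModulusSq (n : ℕ) {m : ℕ} (hm : m ≠ 0) :
    ∫ x in Ioi 0, (nicholsonKernel n x : ℂ) * besselModulusSq (Complex.I * m / 2) x =
      if n = m then (Real.sinh (Real.pi * m / 2) : ℂ)⁻¹ else 0 := by
  have m_ne_zero : (m : ℝ) ≠ 0 := Nat.cast_ne_zero.2 hm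
  have integrand_eq : ∀ x ∈ Ioi (0 : ℝ),
      (nicholsonKernel n x : ℂ) * besselModulusSq (Complex.I * m / 2) x = 4 / Real.pi ^ 2 *
        (nicholsonKernel n x * ∫ t : ℝ, Complex.exp (Complex.I * (m : ℝ) * t) *
          besselK 0 (2 * x * Real.sinh |t|)) := by
    intro x hx
    rw [← Complex.ofReal_natCast, besselModulusSq_I_mul_div_two m_ne_zero hx, mul_left_comm]
  rw [setIntegral_congr_fun measurableSet_Ioi integrand_eq, integral_const_mul,
    integral_nicholsonKernel_mul_integral_exp_mul_besselK_zero n m_ne_zero,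
    integral_sin_nat_mul_sin_nat n hm]
  have pi_ne_zero : (Real.pi : ℂ) ≠ 0 := Complex.ofReal_ne_zero.2 Real.pi_ne_zero
  split_ifs
  · push_cast
    field_simp
    norm_num
  · simp

lemma norm_mul_besselModulusSq_le (a : ℂ) (n : ℕ) {p x : ℝ} (hp : 0 < p) (hp' : p < 1)
    (hx : 0 < x) :
    ‖a * besselModulusSq (Complex.I * (n + 1) / 2) x‖ ≤
      ‖a‖ * (4 / Real.pi ^ 2 * Real.Gamma p * (∫ t : ℝ, Real.sinh |t| ^ (-p)) * x ^ (-p)) := by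
  rw [norm_mul]
  gcongr
  exact_mod_cast norm_besselModulusSq_I_mul_div_two_le (Nat.cast_ne_zero.2 n.succ_ne_zero) hp hp' hx

lemma summable_norm_mul_besselModulusSq {b : ℕ → ℂ} (hb : Summable fun k ↦ ‖b k‖) {x : ℝ}
    (hx : 0 < x) :
    Summable fun k : ℕ ↦ ‖b k * besselModulusSq (Complex.I * (k + 1) / 2) x‖ :=
  .of_nonneg_of_le (fun _ ↦ norm_nonneg _)
    (fun k ↦ norm_mul_besselModulusSq_le (b k) k (p := 1 / 2) (by norm_num) (by norm_num) hx)
    (hb.mul_right _)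

lemma integrableOn_nicholsonKernel_mul_mul_besselModulusSq (n : ℕ) (a : ℂ) (k : ℕ) :
    IntegrableOn (fun x ↦ (nicholsonKernel n x : ℂ) *
      (a * besselModulusSq (Complex.I * (k + 1) / 2) x)) (Ioi 0) := by
  have := (integrableOn_nicholsonKernel_mul_besselModulusSq n (ω := (k + 1 : ℕ))
    (Nat.cast_ne_zero.2 k.succ_ne_zero)).const_mul a
  push_cast at this
  simpa only [IntegrableOn, mul_left_comm a] using this

lemma ae_norm_nicholsonKernel_mul_mul_besselModulusSq_le (n : ℕ) (a : ℂ) (k : ℕ) {p : ℝ}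
    (hp : 0 < p) (hp' : p < 1) :
    ∀ᵐ x ∂volume.restrict (Ioi 0),
      ‖(nicholsonKernel n x : ℂ) * (a * besselModulusSq (Complex.I * (k + 1) / 2) x)‖ ≤
        ‖a‖ * (4 / Real.pi ^ 2 * Real.Gamma p * (∫ t : ℝ, Real.sinh |t| ^ (-p)) *
          ‖nicholsonKernel n x * x ^ (-p)‖) := by
  refine ae_restrict_of_forall_mem measurableSet_Ioi fun x hx ↦ ?_
  rw [norm_mul, Complex.norm_real, norm_mul (nicholsonKernel n x),
    Real.norm_of_nonneg (Real.rpow_pos_of_pos hx _).le]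
  refine (mul_le_mul_of_nonneg_left (norm_mul_besselModulusSq_le a k hp hp' hx)
    (norm_nonneg _)).trans_eq ?_
  ring

lemma integrableOn_nicholsonKernel_mul_tsum (n : ℕ) {b : ℕ → ℂ} (hb : Summable fun k ↦ ‖b k‖) :
    IntegrableOn (fun x ↦ (nicholsonKernel n x : ℂ) *
      ∑' k : ℕ, b k * besselModulusSq (Complex.I * (k + 1) / 2) x) (Ioi 0) := by
  simp only [← tsum_mul_left]
  exact integrable_tsum_of_norm_le_mul
    (fun k ↦ (integrableOn_nicholsonKernel_mul_mul_besselModulusSq n (b k) k).1) hb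
    ((integrableOn_nicholsonKernel_mul_rpow n (p := 3 / 4) (by norm_num)
      (by norm_num)).norm.const_mul _)
    fun k ↦ ae_norm_nicholsonKernel_mul_mul_besselModulusSq_le n (b k) k (by norm_num) (by norm_num)

lemma integral_nicholsonKernel_mul_tsum (n : ℕ) {b : ℕ → ℂ} (hb : Summable fun k ↦ ‖b k‖) :
    ∫ x in Ioi 0, (nicholsonKernel (n + 1) x : ℂ) *
      ∑' k : ℕ, b k * besselModulusSq (Complex.I * (k + 1) / 2) x =
      b n * (Real.sinh (Real.pi * (n + 1 : ℕ) / 2) : ℂ)⁻¹ := by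
  have hasSum_integral := hasSum_integral_of_norm_le_mul
    (fun k ↦ (integrableOn_nicholsonKernel_mul_mul_besselModulusSq (n + 1) (b k) k).1) hb
    ((integrableOn_nicholsonKernel_mul_rpow (n + 1) (p := 3 / 4) (by norm_num)
      (by norm_num)).norm.const_mul _)
    fun k ↦ ae_norm_nicholsonKernel_mul_mul_besselModulusSq_le (n + 1) (b k) k (by norm_num)
      (by norm_num)
  have integral_term (k : ℕ) : ∫ x in Ioi 0, (nicholsonKernel (n + 1) x : ℂ) *
      (b k * besselModulusSq (Complex.I * (k + 1) / 2) x) =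
      if k = n then b n * (Real.sinh (Real.pi * (n + 1 : ℕ) / 2) : ℂ)⁻¹ else 0 := by
    simp only [mul_left_comm _ (b k), ← Nat.cast_add_one (R := ℂ)]
    rw [integral_const_mul, integral_nicholsonKernel_mul_besselModulusSq _ k.succ_ne_zero]
    split_ifs with h h' h'
    · rw [h', ← h']
    · lia
    · lia
    · rw [mul_zero]
  simp only [integral_term, tsum_mul_left] at hasSum_integral
  exact hasSum_integral.unique (hasSum_ite_eq n _)

end InversionFormula

theorem statement0 (a : ℕ → ℂ) (ha : Summable fun n : ℕ => ‖a (n + 1)‖)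
    (f : ℝ → ℂ)
    (hf : ∀ x : ℝ, 0 < x → f x = ∑' n : ℕ, a (n + 1) *
      ((besselJ (Complex.I * (n + 1) / 2) x) ^ 2 + (besselY (Complex.I * (n + 1) / 2) x) ^ 2))
    (Φ : ℕ → ℝ → ℝ)
    (hΦ : ∀ (n : ℕ) (x : ℝ), Φ n x = x * ∫ u in (0 : ℝ)..Real.pi,
      besselJ0 (2 * x * Real.cosh u) * Real.sinh (2 * u) * Real.sin (n * u)) :
    (∀ x : ℝ, 0 < x → Summable fun n : ℕ => ‖a (n + 1) *
      ((besselJ (Complex.I * (n + 1) / 2) x) ^ 2 + (besselY (Complex.I * (n + 1) / 2) x) ^ 2)‖) ∧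
    ∀ n : ℕ, 1 ≤ n → ∃ I₀ : ℂ,
      Filter.Tendsto (fun T : ℝ => ∫ x in (0 : ℝ)..T, (Φ n x : ℂ) * f x)
        Filter.atTop (𝓝 I₀) ∧
      a n = (Real.sinh (Real.pi * n / 2) : ℂ) * I₀ := by
  obtain rfl : Φ = nicholsonKernel := funext₂ hΦ
  refine ⟨fun x hx ↦ summable_norm_mul_besselModulusSq ha hx, fun n hn ↦ ?_⟩
  obtain ⟨k, rfl⟩ := Nat.exists_eq_add_of_le' hn
  have integrand_eq : Set.EqOn (fun x ↦ (nicholsonKernel (k + 1) x : ℂ) * ∑' j : ℕ,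
      a (j + 1) * besselModulusSq (Complex.I * (j + 1) / 2) x)
      (fun x ↦ (nicholsonKernel (k + 1) x : ℂ) * f x) (Set.Ioi 0) :=
    fun x hx ↦ congrArg _ (hf x hx).symm
  have integrable_kernel_mul := (integrableOn_nicholsonKernel_mul_tsum (k + 1) ha).congr_fun
    integrand_eq measurableSet_Ioi
  refine ⟨_, intervalIntegral_tendsto_integral_Ioi 0 integrable_kernel_mul tendsto_id, ?_⟩
  have sinh_ne_zero : Real.sinh (Real.pi * (k + 1 : ℕ) / 2) ≠ 0 :=
    Real.sinh_ne_zero.2 (by positivity)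
  rw [← setIntegral_congr_fun measurableSet_Ioi integrand_eq,
    integral_nicholsonKernel_mul_tsum k ha, mul_left_comm,
    mul_inv_cancel₀ (Complex.ofReal_ne_zero.2 sinh_ne_zero), mul_one]
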